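/- Let {(H_i, U_i) : i ∈ ℕ} be a family of Z2-graded Hilbert spaces, let N_i ⊆ B(H_i) be von Neumann algebras with U_iN_iU_i = N_i, and let ξ = {ξ_i} be a sequence of unit vectors with U_iξ_i = ξ_i for all i. Then the twisted commutant of the infinite Fermi tensor product satisfies (⊗̂_ξ N_i)^≀ = ⊗̂_ξ N_i^≀, as von Neumann algebras on the infinite tensor product Hilbert space ⊗_ξ H_i graded by ⊗_{i∈ℕ} U_i. -/

import Mathlib

noncomputable section

open scoped InnerProductSpace ComplexOrder

/-- The even part `T₊ = (T + UTU)/2` and odd part `T₋ = (T - UTU)/2` of an operator on a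
`ℤ₂`-graded Hilbert space `(H, U)`;  the *twist automorphism* is `η_U(T) = T₊ + i U T₋`. -/
def twist {H : Type*} [NormedAddCommGroup H] [InnerProductSpace ℂ H]
    (U : H →L[ℂ] H) (T : H →L[ℂ] H) : H →L[ℂ] H :=
  (2⁻¹ : ℂ) • (T + U * T * U) + ((2⁻¹ : ℂ) * Complex.I) • (U * (T - U * T * U))

/-- The *twisted commutant* `M^≀ = η_U(M')` of a set of operators on a `ℤ₂`-graded Hilbert
space `(H, U)` (for `ad U`-invariant `M` this coincides with `η_U(M)'`). -/
def twistedComm {H : Type*} [NormedAddCommGroup H] [InnerProductSpace ℂ H]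
    (U : H →L[ℂ] H) (M : Set (H →L[ℂ] H)) : Set (H →L[ℂ] H) :=
  twist U '' Set.centralizer M

/-- The set of generating operators `T₁ ⊗̂ ⋯ ⊗̂ T_k ⊗̂ 1 ⊗̂ 1 ⊗̂ ⋯` (with each `Tᵢ ∈ N i`
homogeneous) of the infinite Fermi tensor product `⊗̂ N i` of graded von Neumann algebras,
acting on a realization `tp` of the infinite tensor product Hilbert space: on simple tensors
with homogeneous entries, `(T₁ ⊗̂ ⋯ ⊗̂ T_k ⊗̂ 1 ⊗̂ ⋯)(x₁ ⊗ ⋯ ⊗ xₙ) = ε ⋅ (T₁ x₁ ⊗ ⋯)` with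
the Koszul sign `ε = (-1)^#{(i,j) : j < i, Tᵢ odd, xⱼ odd}`.  The infinite Fermi product
`⊗̂ N i` itself is the von Neumann algebra this set generates (its double commutant). -/
def infFermiGen {H : ℕ → Type*} [∀ i, NormedAddCommGroup (H i)]
    [∀ i, InnerProductSpace ℂ (H i)]
    {HH : Type*} [NormedAddCommGroup HH] [InnerProductSpace ℂ HH]
    (U : ∀ i : ℕ, H i →L[ℂ] H i)
    (tp : (n : ℕ) → ((i : Fin n) → H i.val) → HH)
    (N : ∀ i : ℕ, Set (H i →L[ℂ] H i)) : Set (HH →L[ℂ] HH) :=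
  {P : HH →L[ℂ] HH |
    ∃ (k : ℕ) (T : (i : Fin k) → (H i.val →L[ℂ] H i.val)) (sT : Fin k → Bool),
      (∀ i : Fin k, T i ∈ N i.val) ∧
      (∀ i : Fin k, U i.val * T i * U i.val = cond (sT i) (-(T i)) (T i)) ∧
      ∀ (n : ℕ), k ≤ n → ∀ (x : (i : Fin n) → H i.val) (sx : Fin n → Bool),
        (∀ i : Fin n, U i.val (x i) = cond (sx i) (-(x i)) (x i)) →
        P (tp n x) = ((-1 : ℂ) ^ (Finset.univ.filter (fun p : Fin n × Fin n =>
            p.2 < p.1 ∧ (if h : (p.1 : ℕ) < k then sT ⟨p.1, h⟩ else false) = true ∧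
            sx p.2 = true)).card) •
          tp n (fun i : Fin n => if h : (i : ℕ) < k then T ⟨i, h⟩ (x i) else x i)}

set_option linter.unusedSectionVars false
set_option linter.style.haveILetI false

section Site
open Filter Topology
variable {H : Type*} [NormedAddCommGroup H] [InnerProductSpace ℂ H] [CompleteSpace H]

def injL : H →L[ℂ] WithLp 2 (H × H) :=
  ((WithLp.prodContinuousLinearEquiv 2 ℂ H H).symm : (H × H) →L[ℂ] WithLp 2 (H × H)) ∘L
    ContinuousLinearMap.inl ℂ H H
def injR : H →L[ℂ] WithLp 2 (H × H) :=
  ((WithLp.prodContinuousLinearEquiv 2 ℂ H H).symm : (H × H) →L[ℂ] WithLp 2 (H × H)) ∘L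
    ContinuousLinearMap.inr ℂ H H
def prjL : WithLp 2 (H × H) →L[ℂ] H :=
  ContinuousLinearMap.fst ℂ H H ∘L
  ((WithLp.prodContinuousLinearEquiv 2 ℂ H H) : WithLp 2 (H × H) →L[ℂ] (H × H))
def prjR : WithLp 2 (H × H) →L[ℂ] H :=
  ContinuousLinearMap.snd ℂ H H ∘L
  ((WithLp.prodContinuousLinearEquiv 2 ℂ H H) : WithLp 2 (H × H) →L[ℂ] (H × H))

lemma prjL_apply (z : WithLp 2 (H × H)) : prjL z = z.fst := rfl
lemma prjR_apply (z : WithLp 2 (H × H)) : prjR z = z.snd := rfl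
lemma injL_apply (h : H) : injL h = WithLp.toLp 2 (h, (0:H)) := rfl
lemma injR_apply (h : H) : injR h = WithLp.toLp 2 ((0:H), h) := rfl

lemma norm_injL (h : H) : ‖injL h‖ = ‖h‖ := by
  rw [injL_apply]; simp
lemma norm_injR (h : H) : ‖injR h‖ = ‖h‖ := by
  rw [injR_apply]; simp
lemma norm_prjL_le (z : WithLp 2 (H × H)) : ‖prjL z‖ ≤ ‖z‖ := by
  rw [prjL_apply]
  refine abs_le_of_sq_le_sq' ?_ (norm_nonneg z) |>.2
  have := WithLp.prod_norm_sq_eq_of_L2 z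
  nlinarith [sq_nonneg ‖z.fst‖, sq_nonneg ‖z.snd‖]
lemma norm_prjR_le (z : WithLp 2 (H × H)) : ‖prjR z‖ ≤ ‖z‖ := by
  rw [prjR_apply]
  refine abs_le_of_sq_le_sq' ?_ (norm_nonneg z) |>.2
  have := WithLp.prod_norm_sq_eq_of_L2 z
  nlinarith [sq_nonneg ‖z.fst‖, sq_nonneg ‖z.snd‖]
lemma inner_pair (z w : WithLp 2 (H × H)) : ⟪z, w⟫_ℂ = ⟪prjL z, prjL w⟫_ℂ + ⟪prjR z, prjR w⟫_ℂ := by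
  rw [WithLp.prod_inner_apply]; rfl
@[simp] lemma prjL_injL (h : H) : prjL (injL h) = h := rfl
@[simp] lemma prjL_injR (h : H) : prjL (injR h) = 0 := rfl
@[simp] lemma prjR_injL (h : H) : prjR (injL h) = 0 := rfl
@[simp] lemma prjR_injR (h : H) : prjR (injR h) = h := rfl
lemma inj_prj (z : WithLp 2 (H × H)) : injL (prjL z) + injR (prjR z) = z := by
  apply WithLp.ofLp_injective
  ext
  · change z.fst + 0 = z.fst; simp
  · change 0 + z.snd = z.snd; simp

def relSub (R : Submodule ℂ (H × H)) (δ : ℝ) : Submodule ℂ (WithLp 2 (H × H)) :=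
  R.map ((injL ∘L ContinuousLinearMap.fst ℂ H H +
    (δ : ℂ) • (injR ∘L ContinuousLinearMap.snd ℂ H H)).toLinearMap)

lemma mem_relSub (R : Submodule ℂ (H × H)) (δ : ℝ) (z) :
    z ∈ relSub R δ ↔ ∃ u v, (u, v) ∈ R ∧ injL u + (δ : ℂ) • injR v = z := by
  simp [relSub, Submodule.mem_map]

structure RelProj (R : Submodule ℂ (H × H)) (δ : ℝ) where
  (P11 P12 P21 P22 : H →L[ℂ] H)
  s11 : star P11 = P11
  s21 : star P21 = P12
  s22 : star P22 = P22
  mem : ∀ h k, ((P11 h + P12 k, P21 h + P22 k) : H × H) ∈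
    closure {z : H × H | ∃ u v, (u, v) ∈ R ∧ z = (u, (δ : ℂ) • v)}
  fix1 : ∀ u v, (u, v) ∈ R → P11 u + (δ : ℂ) • P12 v = u
  fix2 : ∀ u v, (u, v) ∈ R → P21 u + (δ : ℂ) • P22 v = (δ : ℂ) • v
  ker1 : ∀ p q, (∀ u v, (u, v) ∈ R → ⟪p, u⟫_ℂ + δ * ⟪q, v⟫_ℂ = 0) → P11 p + P12 q = 0
  ker2 : ∀ p q, (∀ u v, (u, v) ∈ R → ⟪p, u⟫_ℂ + δ * ⟪q, v⟫_ℂ = 0) → P21 p + P22 q = 0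
  n11 : ‖P11‖ ≤ 1
  n12 : ‖P12‖ ≤ 1
  n22 : ‖P22‖ ≤ 1
  n22' : ‖1 - P22‖ ≤ 1
  orth : ∀ h k u v, (u, v) ∈ R →
    ⟪h - (P11 h + P12 k), u⟫_ℂ + δ * ⟪k - (P21 h + P22 k), v⟫_ℂ = 0
  comm : ∀ a : H →L[ℂ] H, (∀ u v, (u, v) ∈ R → (a u, a v) ∈ R) →
    (∀ u v, (u, v) ∈ R → (star a u, star a v) ∈ R) → a * P21 = P21 * a

lemma exists_relProj (R : Submodule ℂ (H × H)) (δ : ℝ) : Nonempty (RelProj R δ) := by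
  set K := (relSub R δ).topologicalClosure with hK
  haveI : CompleteSpace K := (Submodule.isClosed_topologicalClosure _).completeSpace_coe
  set P := K.starProjection with hP
  have hPs : ∀ z w, ⟪P z, w⟫_ℂ = ⟪z, P w⟫_ℂ := fun z w => K.inner_starProjection_left_eq_right z w
  have hPn : ∀ z, ‖P z‖ ≤ ‖z‖ := fun z => K.norm_starProjection_apply_le z
  have hPfix : ∀ z ∈ K, P z = z := fun z hz => Submodule.starProjection_eq_self_iff.2 hz
  have hRK : ∀ u v, (u, v) ∈ R → injL u + (δ : ℂ) • injR v ∈ K := fun u v h =>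
    Submodule.le_topologicalClosure _ ((mem_relSub R δ _).2 ⟨u, v, h, rfl⟩)
  have horth : ∀ z : WithLp 2 (H × H),
      (∀ u v, (u, v) ∈ R → ⟪prjL z, u⟫_ℂ + δ * ⟪prjR z, v⟫_ℂ = 0) → z ∈ Kᗮ := by
    intro z hz
    rw [hK, Submodule.orthogonal_closure]
    rw [Submodule.mem_orthogonal']
    intro w hw
    obtain ⟨u, v, h, rfl⟩ := (mem_relSub R δ _).1 hw
    rw [inner_pair]
    simpa [inner_smul_right] using hz u v h
  have horth' : ∀ z ∈ Kᗮ, ∀ u v, (u, v) ∈ R → ⟪prjL z, u⟫_ℂ + δ * ⟪prjR z, v⟫_ℂ = 0 := by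
    intro z hz u v h
    have := (Submodule.mem_orthogonal' K z).1 hz _ (hRK u v h)
    rw [inner_pair] at this
    simpa [inner_smul_right] using this
  have hker : ∀ z ∈ Kᗮ, P z = 0 := fun z hz => (Submodule.starProjection_apply_eq_zero_iff K).2 hz
  have hdec : ∀ h k : H, P (injL h + injR k) = P (injL h) + P (injR k) := fun h k => map_add _ _ _
  refine ⟨{ P11 := prjL ∘L P ∘L injL, P12 := prjL ∘L P ∘L injR, P21 := prjR ∘L P ∘L injL,
            P22 := prjR ∘L P ∘L injR, s11 := ?_, s21 := ?_, s22 := ?_, mem := ?_, fix1 := ?_,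
            fix2 := ?_, ker1 := ?_, ker2 := ?_, n11 := ?_, n12 := ?_, n22 := ?_, n22' := ?_,
            orth := ?_, comm := ?_ }⟩
  · rw [ContinuousLinearMap.star_eq_adjoint, eq_comm, ContinuousLinearMap.eq_adjoint_iff]
    intro x y
    have := hPs (injL x) (injL y)
    rw [inner_pair, inner_pair] at this
    simpa using this
  · rw [ContinuousLinearMap.star_eq_adjoint, eq_comm, ContinuousLinearMap.eq_adjoint_iff]
    intro x y
    have := hPs (injR x) (injL y)
    rw [inner_pair, inner_pair] at this
    simpa using this
  · rw [ContinuousLinearMap.star_eq_adjoint, eq_comm, ContinuousLinearMap.eq_adjoint_iff]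
    intro x y
    have := hPs (injR x) (injR y)
    rw [inner_pair, inner_pair] at this
    simpa using this
  · intro h k
    have h1 : P (injL h + injR k) ∈ closure (relSub R δ : Set (WithLp 2 (H × H))) := by
      rw [← Submodule.topologicalClosure_coe]
      exact Submodule.starProjection_apply_mem K _
    have hc : Continuous (fun z : WithLp 2 (H × H) => ((prjL z, prjR z) : H × H)) := by
      exact prjL.continuous.prodMk prjR.continuous
    have := image_closure_subset_closure_image hc ⟨_, h1, rfl⟩
    rw [hdec] at this
    simp only [map_add] at this
    refine closure_mono ?_ this
    rintro _ ⟨z, hz, rfl⟩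
    obtain ⟨u, v, h, rfl⟩ := (mem_relSub R δ _).1 hz
    exact ⟨u, v, h, by simp⟩
  · intro u v h
    have := congrArg prjL (hPfix _ (hRK u v h))
    simpa using this
  · intro u v h
    have := congrArg prjR (hPfix _ (hRK u v h))
    simpa using this
  · intro p q h
    have := hker (injL p + injR q) (horth _ (by simpa using h))
    have := congrArg prjL this
    simpa using this
  · intro p q h
    have := hker (injL p + injR q) (horth _ (by simpa using h))
    have := congrArg prjR this
    simpa using this
  · refine ContinuousLinearMap.opNorm_le_bound _ zero_le_one fun x => ?_
    rw [one_mul]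
    exact (norm_prjL_le _).trans ((hPn _).trans (norm_injL x).le)
  · refine ContinuousLinearMap.opNorm_le_bound _ zero_le_one fun x => ?_
    rw [one_mul]
    exact (norm_prjL_le _).trans ((hPn _).trans (norm_injR x).le)
  · refine ContinuousLinearMap.opNorm_le_bound _ zero_le_one fun x => ?_
    rw [one_mul]
    exact (norm_prjR_le _).trans ((hPn _).trans (norm_injR x).le)
  · refine ContinuousLinearMap.opNorm_le_bound _ zero_le_one fun x => ?_
    rw [one_mul]
    have h1 : (1 - prjR ∘L P ∘L injR : H →L[ℂ] H) x = prjR (Kᗮ.starProjection (injR x)) := by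
      rw [Submodule.starProjection_orthogonal_val]; simp [hP]
    rw [h1]
    exact (norm_prjR_le _).trans ((Kᗮ.norm_starProjection_apply_le _).trans (norm_injR x).le)
  · intro h k u v huv
    have := horth' _ (K.sub_starProjection_mem_orthogonal (injL h + injR k)) u v huv
    simpa [hP] using this
  · intro a ha ha'
    -- diagonal operator
    set A : WithLp 2 (H × H) →L[ℂ] WithLp 2 (H × H) :=
      injL ∘L a ∘L prjL + injR ∘L a ∘L prjR with hA
    have hAK : ∀ z ∈ K, A z ∈ K := by
      intro z hz
      have h1 : (K : Set (WithLp 2 (H × H))) = closure (relSub R δ) :=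
        Submodule.topologicalClosure_coe _
      have hz' : z ∈ closure (relSub R δ : Set (WithLp 2 (H × H))) := by rw [← h1]; exact hz
      have := image_closure_subset_closure_image A.continuous ⟨_, hz', rfl⟩
      change A z ∈ (K : Set _)
      rw [h1]
      refine closure_mono ?_ this
      rintro _ ⟨z, hz, rfl⟩
      obtain ⟨u, v, h, rfl⟩ := (mem_relSub R δ _).1 hz
      exact (mem_relSub R δ _).2 ⟨_, _, ha u v h, by simp [hA]⟩
    have hAK' : ∀ z ∈ Kᗮ, A z ∈ Kᗮ := by
      intro z hz
      refine horth _ fun u v h => ?_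
      have := horth' z hz _ _ (ha' u v h)
      rw [ContinuousLinearMap.star_eq_adjoint, ContinuousLinearMap.adjoint_inner_right,
        ContinuousLinearMap.adjoint_inner_right] at this
      simpa [hA] using this
    have hcomm : ∀ z, P (A z) = A (P z) := by
      intro z
      have h1 : A z = A (P z) + A (z - P z) := by rw [← map_add]; congr 1; abel
      rw [h1, map_add, hPfix _ (hAK _ (Submodule.starProjection_apply_mem K _)),
        hker _ (hAK' _ (K.sub_starProjection_mem_orthogonal z)), add_zero]
    ext x
    have := congrArg prjR (hcomm (injL x))
    simp only [hA] at this
    simpa using this.symm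
end Site

section Site2
open Filter Topology
variable {H : Type*} [NormedAddCommGroup H] [InnerProductSpace ℂ H] [CompleteSpace H]

/-- A von Neumann algebra together with its commutant. -/
structure VNPair (A B : Set (H →L[ℂ] H)) : Prop where
  hA : A = B.centralizer
  hB : B = A.centralizer
  sA : ∀ a ∈ A, star a ∈ A
  sB : ∀ b ∈ B, star b ∈ B

namespace VNPair
variable {A B : Set (H →L[ℂ] H)} (h : VNPair A B)
lemma symm (h : VNPair A B) : VNPair B A := ⟨h.hB, h.hA, h.sB, h.sA⟩
lemma one_mem (h : VNPair A B) : (1 : H →L[ℂ] H) ∈ A := by rw [h.hA]; exact Set.one_mem_centralizer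
lemma zero_mem (h : VNPair A B) : (0 : H →L[ℂ] H) ∈ A := by rw [h.hA]; exact Set.zero_mem_centralizer
lemma mul_mem (h : VNPair A B) {a b} (ha : a ∈ A) (hb : b ∈ A) : a * b ∈ A := by
  rw [h.hA] at *; exact Set.mul_mem_centralizer ha hb
lemma add_mem (h : VNPair A B) {a b} (ha : a ∈ A) (hb : b ∈ A) : a + b ∈ A := by
  rw [h.hA] at *; exact Set.add_mem_centralizer ha hb
lemma smul_mem (h : VNPair A B) (c : ℂ) {a} (ha : a ∈ A) : c • a ∈ A := by
  rw [h.hA, Set.mem_centralizer_iff] at *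
  intro m hm; rw [mul_smul_comm, ha m hm, smul_mul_assoc]
lemma comm (h : VNPair A B) {a b} (ha : a ∈ A) (hb : b ∈ B) : a * b = b * a := by
  rw [h.hB] at hb; exact hb a ha
lemma comm_apply (h : VNPair A B) {a b} (ha : a ∈ A) (hb : b ∈ B) (x : H) : a (b x) = b (a x) := by
  exact DFunLike.congr_fun (h.comm ha hb) x
end VNPair

lemma starOpL (a : H →L[ℂ] H) (x y : H) : ⟪star a x, y⟫_ℂ = ⟪x, a y⟫_ℂ := by
  rw [ContinuousLinearMap.star_eq_adjoint, ContinuousLinearMap.adjoint_inner_left]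
lemma starOpR (a : H →L[ℂ] H) (x y : H) : ⟪x, star a y⟫_ℂ = ⟪a x, y⟫_ℂ := by
  rw [ContinuousLinearMap.star_eq_adjoint, ContinuousLinearMap.adjoint_inner_right]

def cyc (A : Set (H →L[ℂ] H)) (ω : H) : Submodule ℂ H :=
  (Submodule.span ℂ ((fun a : H →L[ℂ] H => a ω) '' A)).topologicalClosure

lemma cyc_closed (A : Set (H →L[ℂ] H)) (ω : H) : IsClosed (cyc A ω : Set H) :=
  Submodule.isClosed_topologicalClosure _

instance (A : Set (H →L[ℂ] H)) (ω : H) : CompleteSpace (cyc A ω) :=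
  (cyc_closed A ω).completeSpace_coe

lemma mem_cyc {A : Set (H →L[ℂ] H)} {a} (ha : a ∈ A) (ω : H) : a ω ∈ cyc A ω :=
  Submodule.le_topologicalClosure _ (Submodule.subset_span ⟨a, ha, rfl⟩)

lemma closure_span_induction {s : Set H} (p : Set H) (hp : IsClosed p) (h0 : (0 : H) ∈ p)
    (hadd : ∀ x ∈ p, ∀ y ∈ p, x + y ∈ p) (hsmul : ∀ (c : ℂ), ∀ x ∈ p, c • x ∈ p) (hs : s ⊆ p)
    {x : H} (hx : x ∈ (Submodule.span ℂ s).topologicalClosure) : x ∈ p := by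
  let q : Submodule ℂ H :=
    { carrier := p, add_mem' := fun {a b} ha hb => hadd a ha b hb, zero_mem' := h0,
      smul_mem' := fun c x hx => hsmul c x hx }
  exact Submodule.topologicalClosure_minimal (Submodule.span ℂ s)
    (t := q) (Submodule.span_le.2 hs) hp hx

lemma tendsto_of_span (C : ℕ → H →L[ℂ] H) (hC : ∀ m, ‖C m‖ ≤ 1) (L : H →L[ℂ] H) (s : Set H)
    (h : ∀ x ∈ s, Tendsto (fun m => C m x) atTop (𝓝 (L x))) {x : H}
    (hx : x ∈ (Submodule.span ℂ s).topologicalClosure) :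
    Tendsto (fun m => C m x) atTop (𝓝 (L x)) := by
  refine closure_span_induction {x | Tendsto (fun m => C m x) atTop (𝓝 (L x))} ?_ ?_ ?_ ?_ h hx
  · refine isClosed_of_closure_subset fun y hy => ?_
    rw [Set.mem_ofPred_eq, Metric.tendsto_atTop]
    intro ε hε
    obtain ⟨z, hz, hyz⟩ := Metric.mem_closure_iff.1 hy (ε / (2 * (2 + ‖L‖))) (by positivity)
    obtain ⟨M, hM⟩ := Metric.tendsto_atTop.1 hz (ε / 2) (by positivity)
    refine ⟨M, fun m hm => ?_⟩
    have h1 := hM m hm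
    rw [dist_eq_norm] at *
    have e1 : C m y - L y = C m (y - z) + (C m z - L z) - L (y - z) := by
      simp only [map_sub]; abel
    have e2 : ‖C m (y - z)‖ ≤ 1 * ‖y - z‖ := (C m).le_of_opNorm_le (hC m) _
    have e3 : ‖L (y - z)‖ ≤ ‖L‖ * ‖y - z‖ := L.le_opNorm _
    have e4 : (2 + ‖L‖) * ‖y - z‖ < ε / 2 := by
      rw [lt_div_iff₀ (by positivity)] at hyz
      linarith
    rw [e1]
    calc _ ≤ ‖C m (y - z) + (C m z - L z)‖ + ‖L (y - z)‖ := norm_sub_le _ _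
      _ ≤ ‖C m (y - z)‖ + ‖C m z - L z‖ + ‖L (y - z)‖ := by gcongr; exact norm_add_le _ _
      _ < ε := by nlinarith [norm_nonneg (y - z)]
  · simp
  · intro x hx y hy; simpa using Tendsto.add hx hy
  · intro c x hx; simpa using Tendsto.const_smul hx c

lemma starProjection_commute (K : Submodule ℂ H) [K.HasOrthogonalProjection] (a : H →L[ℂ] H)
    (h1 : ∀ x ∈ K, a x ∈ K) (h2 : ∀ x ∈ K, star a x ∈ K) :
    a * K.starProjection = K.starProjection * a := by
  ext z
  change a (K.starProjection z) = K.starProjection (a z)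
  have hz : a z = a (K.starProjection z) + a (z - K.starProjection z) := by
    rw [← map_add]; congr 1; abel
  have h3 : a (z - K.starProjection z) ∈ Kᗮ := by
    rw [Submodule.mem_orthogonal']
    intro w hw
    rw [← starOpR]
    exact (Submodule.mem_orthogonal' _ _).1 (K.sub_starProjection_mem_orthogonal z) _ (h2 w hw)
  rw [hz, map_add, (Submodule.starProjection_apply_eq_zero_iff K).2 h3, add_zero,
    Submodule.starProjection_eq_self_iff.2 (h1 _ (Submodule.starProjection_apply_mem K _))]

lemma cyc_inv {A B : Set (H →L[ℂ] H)} (h : VNPair A B) (ω : H) {a} (ha : a ∈ A) {x : H}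
    (hx : x ∈ cyc A ω) : a x ∈ cyc A ω := by
  refine closure_span_induction (a ⁻¹' (cyc A ω : Set H)) ((cyc_closed A ω).preimage a.continuous)
    ?_ ?_ ?_ ?_ hx
  · simp
  · intro x hx y hy
    simp only [Set.mem_preimage, map_add] at *
    exact Submodule.add_mem _ hx hy
  · intro c x hx
    simp only [Set.mem_preimage, map_smul] at *
    exact Submodule.smul_mem _ c hx
  · rintro _ ⟨a', ha', rfl⟩
    exact mem_cyc (h.mul_mem ha ha') ω

lemma cyc_proj_mem {A B : Set (H →L[ℂ] H)} (h : VNPair A B) (ω : H) :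
    (cyc A ω).starProjection ∈ B := by
  rw [h.hB, Set.mem_centralizer_iff]
  intro a ha
  exact starProjection_commute _ a (fun x hx => cyc_inv h ω ha hx)
    (fun x hx => cyc_inv h ω (h.sA a ha) hx)

lemma cyc_self {A B : Set (H →L[ℂ] H)} (h : VNPair A B) (ω : H) : ω ∈ cyc A ω :=
  mem_cyc h.one_mem ω

def dl (m : ℕ) : ℝ := 1 / ((m : ℝ) + 1)
lemma dl_ne (m : ℕ) : (dl m : ℂ) ≠ 0 := by
  have : dl m ≠ 0 := by unfold dl; positivity
  exact_mod_cast this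
lemma dl_tendsto : Tendsto (fun m => (dl m : ℂ)) atTop (𝓝 0) := by
  have := tendsto_one_div_add_atTop_nhds_zero_nat (𝕜 := ℝ)
  have h2 := (Complex.continuous_ofReal.tendsto 0).comp this
  simpa [dl, Function.comp_def] using h2

lemma tendsto_dl_apply (P : ℕ → H →L[ℂ] H) (hP : ∀ m, ‖P m‖ ≤ 1) (x : H) :
    Tendsto (fun m => (dl m : ℂ) • P m x) atTop (𝓝 0) := by
  have h1 : Tendsto (fun m => ‖(dl m : ℂ)‖ * ‖x‖) atTop (𝓝 0) := by
    simpa using (dl_tendsto.norm).mul_const ‖x‖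
  refine squeeze_zero_norm (fun m => ?_) h1
  rw [norm_smul]
  gcongr
  simpa using (P m).le_of_opNorm_le (hP m) x

lemma RelProj.n21 {R : Submodule ℂ (H × H)} {δ : ℝ} (r : RelProj R δ) : ‖r.P21‖ ≤ 1 := by
  rw [← norm_star, r.s21]; exact r.n12

lemma factF {A B : Set (H →L[ℂ] H)} (h : VNPair A B) (ω ω' p q : H)
    (hp : p ∈ cyc A ω') (hq : q ∈ cyc A ω)
    (hpq : ∀ a ∈ A, ⟪q, a ω⟫_ℂ = ⟪star a ω', p⟫_ℂ) :
    ((p, q) : H × H) ∈ closure {z : H × H | ∃ b ∈ B, z = (b ω, star b ω')} := by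
  let R : Submodule ℂ (H × H) :=
    { carrier := {z | ∃ a ∈ A, z = (a ω, a p)}
      add_mem' := by
        rintro _ _ ⟨a, ha, rfl⟩ ⟨b, hb, rfl⟩; exact ⟨a + b, h.add_mem ha hb, by simp⟩
      zero_mem' := ⟨0, h.zero_mem, Prod.ext (by simp) (by simp)⟩
      smul_mem' := by rintro c _ ⟨a, ha, rfl⟩; exact ⟨c • a, h.smul_mem c ha, by simp⟩ }
  have hR : ∀ u v, (u, v) ∈ R ↔ ∃ a ∈ A, u = a ω ∧ v = a p := by
    intro u v
    change (∃ a ∈ A, (u, v) = (a ω, a p)) ↔ _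
    simp
  let r : ∀ m, RelProj R (dl m) := fun m => Classical.choice (exists_relProj R (dl m))
  let b : ℕ → H →L[ℂ] H := fun m => (dl m : ℂ)⁻¹ • (r m).P21
  have hb : ∀ m, b m ∈ B := by
    intro m
    apply h.symm.smul_mem
    rw [h.hB, Set.mem_centralizer_iff]
    intro a ha
    refine (r m).comm a ?_ ?_
    · intro u v huv
      obtain ⟨a', ha', rfl, rfl⟩ := (hR u v).1 huv
      exact (hR _ _).2 ⟨a * a', h.mul_mem ha ha', rfl, rfl⟩
    · intro u v huv
      obtain ⟨a', ha', rfl, rfl⟩ := (hR u v).1 huv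
      exact (hR _ _).2 ⟨star a * a', h.mul_mem (h.sA a ha) ha', rfl, rfl⟩
  have key : ∀ m, ∀ a ∈ A, ∀ u v, (u, v) ∈ R →
      ⟪-((dl m : ℂ) • a q), u⟫_ℂ + dl m * ⟪a ω', v⟫_ℂ = 0 := by
    intro m a ha u v huv
    obtain ⟨a', ha', rfl, rfl⟩ := (hR u v).1 huv
    have h1 := hpq (star a * a') (h.mul_mem (h.sA a ha) ha')
    have h2 : star a' (a ω') = star (star a * a') ω' := by simp
    have h3 : ⟪a q, a' ω⟫_ℂ = ⟪q, (star a * a') ω⟫_ℂ := by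
      change _ = ⟪q, star a (a' ω)⟫_ℂ; rw [starOpR]
    rw [inner_neg_left, inner_smul_left, h3, h1, ← h2, starOpL]
    simp
  have h1 : Tendsto (fun m => (r m).P22 p) atTop (𝓝 ((0 : H →L[ℂ] H) p)) := by
    refine tendsto_of_span _ (fun m => (r m).n22) 0 _ ?_ hp
    rintro _ ⟨a, ha, rfl⟩
    refine (tendsto_dl_apply (fun m => (r m).P21) (fun m => (r m).n21) (a q)).congr fun m => ?_
    have := (r m).ker2 _ _ (key m a ha)
    rw [map_neg, map_smul, neg_add_eq_zero] at this
    exact this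
  have h2 : Tendsto (fun m => (r m).P11 q) atTop (𝓝 ((1 : H →L[ℂ] H) q)) := by
    refine tendsto_of_span _ (fun m => (r m).n11) 1 _ ?_ hq
    rintro _ ⟨a, ha, rfl⟩
    have h3 := tendsto_dl_apply (fun m => (r m).P12) (fun m => (r m).n12) (a p)
    have h4 := (tendsto_const_nhds (x := a ω)).sub h3
    rw [sub_zero] at h4
    refine h4.congr fun m => ?_
    have := (r m).fix1 _ _ ((hR _ _).2 ⟨a, ha, rfl, rfl⟩)
    change a ω - (dl m : ℂ) • (r m).P12 (a p) = (r m).P11 (a ω)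
    nth_rewrite 1 [← this]
    abel
  have e1 : ∀ m, b m ω = p - (r m).P22 p := by
    intro m
    have := (r m).fix2 _ _ ((hR _ _).2 ⟨1, h.one_mem, rfl, rfl⟩)
    simp only [one_apply_eq_self] at this
    change (dl m : ℂ)⁻¹ • (r m).P21 ω = _
    rw [eq_sub_of_add_eq this, ← smul_sub, smul_smul, inv_mul_cancel₀ (dl_ne m), one_smul]
  have e2 : ∀ m, star (b m) ω' = (r m).P11 q := by
    intro m
    have := (r m).ker1 _ _ (key m 1 h.one_mem)
    simp only [one_apply_eq_self, map_neg, map_smul, neg_add_eq_zero] at this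
    have h5 : star (b m) = (dl m : ℂ)⁻¹ • (r m).P12 := by
      simp only [b, star_smul, (r m).s21]; simp
    rw [h5]
    change (dl m : ℂ)⁻¹ • (r m).P12 ω' = _
    rw [← this, smul_smul, inv_mul_cancel₀ (dl_ne m), one_smul]
  have h1' := (tendsto_const_nhds (x := p)).sub h1
  simp only [zero_apply, sub_zero] at h1'
  refine mem_closure_of_tendsto (h1'.prodMk_nhds h2) (Eventually.of_forall fun m => ?_)
  exact ⟨b m, hb m, by rw [e1, e2]⟩

structure AConj (J : H →L⋆[ℂ] H) : Prop where
  inv : ∀ x, J (J x) = x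
  inn : ∀ x y, ⟪J x, J y⟫_ℂ = ⟪y, x⟫_ℂ

lemma AConj.norm {J : H →L⋆[ℂ] H} (hJ : AConj J) (x : H) : ‖J x‖ = ‖x‖ := by
  have h := hJ.inn x x
  rw [inner_self_eq_norm_sq_to_K, inner_self_eq_norm_sq_to_K] at h
  have h' : ‖J x‖ ^ 2 = ‖x‖ ^ 2 := by exact_mod_cast h
  exact (sq_eq_sq₀ (norm_nonneg _) (norm_nonneg _)).1 h'

structure SiteData (A B : Set (H →L[ℂ] H)) (J : H →L⋆[ℂ] H) (ω ω' : H) where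
  (e e' f : H →L[ℂ] H)
  (C C' D : ℕ → H →L[ℂ] H)
  he : e ∈ B
  he' : e' ∈ B
  hf : f ∈ A
  hes : star e' = e'
  heω : e ω = ω
  heω' : e' ω' = ω'
  hfω : f ω = ω
  ne : ‖e‖ ≤ 1
  nf : ‖f‖ ≤ 1
  nC : ∀ m, ‖C m‖ ≤ 1
  nC' : ∀ m, ‖C' m‖ ≤ 1
  sC : ∀ m, star (C m) = C m
  memA : ∀ m h, ((C m h, J (D m h)) : H × H) ∈ closure {z : H × H | ∃ a ∈ A, z = (a ω, star a ω')}
  memB : ∀ m h, ((C' m h, star (D m) (J h)) : H × H) ∈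
    closure {z : H × H | ∃ b ∈ B, z = (b ω, star b ω')}
  limC : ∀ h, Tendsto (fun m => C m (e h)) atTop (𝓝 (e h))
  limC' : ∀ h, Tendsto (fun m => C' m (f h)) atTop (𝓝 (e' (f h)))

lemma exists_siteData {A B : Set (H →L[ℂ] H)} (h : VNPair A B) {J : H →L⋆[ℂ] H} (hJ : AConj J)
    (ω ω' : H) : Nonempty (SiteData A B J ω ω') := by
  let R : Submodule ℂ (H × H) :=
    { carrier := {z | ∃ a ∈ A, z = (a ω, J (star a ω'))}
      add_mem' := by
        rintro _ _ ⟨a, ha, rfl⟩ ⟨b, hb, rfl⟩; exact ⟨a + b, h.add_mem ha hb, by simp⟩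
      zero_mem' := ⟨0, h.zero_mem, Prod.ext (by simp) (by simp)⟩
      smul_mem' := by rintro c _ ⟨a, ha, rfl⟩; exact ⟨c • a, h.smul_mem c ha, by simp⟩ }
  have hR : ∀ u v, (u, v) ∈ R ↔ ∃ a ∈ A, u = a ω ∧ v = J (star a ω') := by
    intro u v
    change (∃ a ∈ A, (u, v) = (a ω, J (star a ω'))) ↔ _
    simp
  let r : ∀ m, RelProj R (dl m) := fun m => Classical.choice (exists_relProj R (dl m))
  set e := (cyc A ω).starProjection with he
  set e' := (cyc A ω').starProjection with he'
  set f := (cyc B ω).starProjection with hf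
  have e'B : e' ∈ B := cyc_proj_mem h ω'
  let C'0 : ℕ → H →L[ℂ] H := fun m => J.comp ((1 - (r m).P22).comp J)
  have C'0_apply : ∀ m x, C'0 m x = J (J x - (r m).P22 (J x)) := fun m x => rfl
  let D : ℕ → H →L[ℂ] H := fun m => (dl m : ℂ)⁻¹ • (r m).P21
  have hDs : ∀ m x, star (D m) x = (dl m : ℂ)⁻¹ • (r m).P12 x := by
    intro m x
    have h5 : star (D m) = (dl m : ℂ)⁻¹ • (r m).P12 := by
      simp only [D, star_smul, (r m).s21]; simp
    rw [h5]; rfl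
  have e's : star e' = e' := by
    rw [ContinuousLinearMap.star_eq_adjoint, eq_comm, ContinuousLinearMap.eq_adjoint_iff]
    intro x y
    exact Submodule.inner_starProjection_left_eq_right _ x y
  have e'ω' : e' ω' = ω' := Submodule.starProjection_eq_self_iff.2 (cyc_self h ω')
  refine ⟨{ e := e, e' := e', f := f, C := fun m => (r m).P11, C' := fun m => C'0 m * e', D := D,
            he := cyc_proj_mem h ω, he' := e'B, hf := cyc_proj_mem h.symm ω,
            hes := e's
            heω := Submodule.starProjection_eq_self_iff.2 (cyc_self h ω)
            heω' := e'ω'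
            hfω := Submodule.starProjection_eq_self_iff.2 (cyc_self h.symm ω)
            ne := Submodule.starProjection_norm_le _, nf := Submodule.starProjection_norm_le _
            nC := fun m => (r m).n11, nC' := ?_, sC := fun m => (r m).s11, memA := ?_, memB := ?_
            limC := ?_, limC' := ?_ }⟩
  · intro m
    refine ContinuousLinearMap.opNorm_le_bound _ zero_le_one fun x => ?_
    rw [one_mul]
    change ‖C'0 m (e' x)‖ ≤ _
    rw [C'0_apply, hJ.norm]
    have h1 : J (e' x) - (r m).P22 (J (e' x)) = (1 - (r m).P22) (J (e' x)) := rfl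
    rw [h1]
    have h2 := (1 - (r m).P22).le_of_opNorm_le (r m).n22' (J (e' x))
    rw [one_mul, hJ.norm] at h2
    exact h2.trans (Submodule.norm_starProjection_apply_le _ _)
  · intro m x
    have h1 := (r m).mem x 0
    simp only [map_zero, add_zero] at h1
    have hc : Continuous (fun z : H × H => ((z.1, J ((dl m : ℂ)⁻¹ • z.2)) : H × H)) := by
      have := J.continuous
      fun_prop
    have h2 := image_closure_subset_closure_image hc ⟨_, h1, rfl⟩
    refine closure_mono ?_ h2
    rintro _ ⟨_, ⟨u, v, huv, rfl⟩, rfl⟩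
    obtain ⟨a, ha, rfl, rfl⟩ := (hR u v).1 huv
    refine ⟨a, ha, ?_⟩
    simp only [smul_smul, inv_mul_cancel₀ (dl_ne m), one_smul, hJ.inv]
  · intro m x
    have hx : star (D m) (J x) = star (D m) (J (e' x)) := by
      rw [hDs, hDs]
      have h1 := (r m).ker1 0 (J (x - e' x)) (by
        intro u v huv
        obtain ⟨a, ha, rfl, rfl⟩ := (hR u v).1 huv
        rw [hJ.inn]
        have h2 := (Submodule.mem_orthogonal _ _).1
          ((cyc A ω').sub_starProjection_mem_orthogonal x) _ (mem_cyc (h.sA a ha) ω')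
        rw [h2]; simp)
      simp only [map_zero, zero_add, map_sub] at h1
      rw [sub_eq_zero.1 h1]
    rw [hx]
    have hg : e' x ∈ cyc A ω' := Submodule.starProjection_apply_mem _ _
    change ((C'0 m (e' x), _) : H × H) ∈ _
    generalize e' x = g at hg
    have h1 := (r m).mem 0 (J g)
    simp only [map_zero, zero_add] at h1
    refine factF h ω ω' _ _ ?_ ?_ ?_
    · rw [C'0_apply, map_sub, hJ.inv]
      refine Submodule.sub_mem _ hg ?_
      have hc : Continuous (fun z : H × H => J z.2) := J.continuous.comp continuous_snd
      have h2 := image_closure_subset_closure_image hc ⟨_, h1, rfl⟩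
      refine (cyc_closed A ω').closure_subset_iff.2 ?_ h2
      rintro _ ⟨_, ⟨u, v, huv, rfl⟩, rfl⟩
      obtain ⟨a, ha, rfl, rfl⟩ := (hR u v).1 huv
      change J ((dl m : ℂ) • J (star a ω')) ∈ cyc A ω'
      rw [ContinuousLinearMap.map_smulₛₗ, hJ.inv]
      exact Submodule.smul_mem _ _ (mem_cyc (h.sA a ha) ω')
    · rw [hDs]
      refine Submodule.smul_mem _ _ ?_
      have h2 := image_closure_subset_closure_image (continuous_fst) ⟨_, h1, rfl⟩
      refine (cyc_closed A ω).closure_subset_iff.2 ?_ h2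
      rintro _ ⟨_, ⟨u, v, huv, rfl⟩, rfl⟩
      obtain ⟨a, ha, rfl, rfl⟩ := (hR u v).1 huv
      exact mem_cyc ha ω
    · intro a ha
      have h2 := (r m).orth 0 (J g) _ _ ((hR _ _).2 ⟨a, ha, rfl, rfl⟩)
      simp only [map_zero, zero_add, zero_sub, inner_neg_left] at h2
      rw [neg_add_eq_zero] at h2
      rw [hDs, inner_smul_left, h2, C'0_apply]
      have := dl_ne m
      simp only [map_inv₀, Complex.conj_ofReal]
      rw [← mul_assoc, inv_mul_cancel₀ this, one_mul]
      rw [← hJ.inn (J (J g - _)), hJ.inv]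
  · intro x
    have hx : e x ∈ cyc A ω := Submodule.starProjection_apply_mem _ _
    refine tendsto_of_span (fun m => (r m).P11) (fun m => (r m).n11) 1 _ ?_ hx
    rintro _ ⟨a, ha, rfl⟩
    have h3 := tendsto_dl_apply (fun m => (r m).P12) (fun m => (r m).n12) (J (star a ω'))
    have h4 := (tendsto_const_nhds (x := a ω)).sub h3
    rw [sub_zero] at h4
    refine h4.congr fun m => ?_
    have := (r m).fix1 _ _ ((hR _ _).2 ⟨a, ha, rfl, rfl⟩)
    change a ω - (dl m : ℂ) • (r m).P12 (J (star a ω')) = (r m).P11 (a ω)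
    nth_rewrite 1 [← this]
    abel
  · intro x
    have hx : f x ∈ cyc B ω := Submodule.starProjection_apply_mem _ _
    refine tendsto_of_span _ ?_ e' _ ?_ hx
    · intro m
      refine ContinuousLinearMap.opNorm_le_bound _ zero_le_one fun x => ?_
      rw [one_mul]
      change ‖C'0 m (e' x)‖ ≤ _
      rw [C'0_apply, hJ.norm]
      have h1 : J (e' x) - (r m).P22 (J (e' x)) = (1 - (r m).P22) (J (e' x)) := rfl
      rw [h1]
      have h2 := (1 - (r m).P22).le_of_opNorm_le (r m).n22' (J (e' x))
      rw [one_mul, hJ.norm] at h2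
      exact h2.trans (Submodule.norm_starProjection_apply_le _ _)
    · rintro _ ⟨b, hb, rfl⟩
      have h3 := tendsto_dl_apply (fun m => (r m).P21) (fun m => (r m).n21) (star b ω')
      have h3' := (J.continuous.tendsto _).comp h3
      have h4 := (tendsto_const_nhds (x := e' (b ω))).sub h3'
      rw [map_zero, sub_zero] at h4
      refine h4.congr fun m => ?_
      change e' (b ω) - J ((dl m : ℂ) • (r m).P21 (star b ω')) = C'0 m (e' (b ω))
      have h5 := (r m).ker2 (-((dl m : ℂ) • star b ω')) (J (e' (b ω))) (by
        intro u v huv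
        obtain ⟨a, ha, rfl, rfl⟩ := (hR u v).1 huv
        rw [hJ.inn, inner_neg_left, inner_smul_left, starOpL, starOpL]
        rw [h.comm_apply ha e'B, ← h.comm_apply ha hb]
        rw [← starOpL e', e's, e'ω']
        simp)
      rw [map_neg, map_smul, neg_add_eq_zero] at h5
      rw [h5, C'0_apply, map_sub, hJ.inv]

lemma exists_conj (ξ : H) (hξ : ‖ξ‖ = 1) : ∃ J : H →L⋆[ℂ] H, AConj J ∧ J ξ = ξ := by
  classical
  have ho : Orthonormal ℂ ((↑) : ({ξ} : Set H) → H) := by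
    rw [orthonormal_iff_ite]
    rintro ⟨x, rfl⟩ ⟨y, rfl⟩
    simp [hξ]
  obtain ⟨w, b, hw, hb⟩ := ho.exists_hilbertBasis_extension
  have hin : ∀ f g : lp (fun _ : w => ℂ) 2, ⟪star f, star g⟫_ℂ = ⟪g, f⟫_ℂ := by
    intro f g
    rw [lp.inner_eq_tsum, lp.inner_eq_tsum]
    refine tsum_congr fun i => ?_
    simp [mul_comm]
  let J0 : H →ₛₗ[starRingEnd ℂ] H :=
    { toFun := fun x => b.repr.symm (star (b.repr x))
      map_add' := fun x y => by simp
      map_smul' := fun c x => by simp [star_smul] }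
  have hJ0 : ∀ x, J0 x = b.repr.symm (star (b.repr x)) := fun x => rfl
  have hn : ∀ x, ‖J0 x‖ ≤ 1 * ‖x‖ := by
    intro x
    rw [hJ0, LinearIsometryEquiv.norm_map, norm_star, LinearIsometryEquiv.norm_map, one_mul]
  refine ⟨J0.mkContinuous 1 hn, ⟨?_, ?_⟩, ?_⟩
  · intro x
    simp [hJ0]
  · intro x y
    simp only [LinearMap.mkContinuous_apply, hJ0]
    rw [LinearIsometryEquiv.inner_map_map, hin, LinearIsometryEquiv.inner_map_map]
  · simp only [LinearMap.mkContinuous_apply, hJ0]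
    have hξw : ξ ∈ w := hw rfl
    have h1 : b ⟨ξ, hξw⟩ = ξ := by rw [hb]
    rw [LinearIsometryEquiv.symm_apply_eq]
    rw [← h1, b.repr_self]
    ext i
    simp only [lp.star_apply, lp.single_apply]
    by_cases hi : i = ⟨ξ, hξw⟩
    · subst hi; simp
    · simp [hi]
end Site2

section Ext3
variable {HH : Type*} [NormedAddCommGroup HH] [InnerProductSpace ℂ HH] [CompleteSpace HH]

lemma inner_linComb {ι : Type*} (v w : ι → HH) (c : ι →₀ ℂ) :
    ⟪Finsupp.linearCombination ℂ v c, Finsupp.linearCombination ℂ w c⟫_ℂ =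
      ∑ i ∈ c.support, ∑ j ∈ c.support, (starRingEnd ℂ) (c i) * c j * ⟪v i, w j⟫_ℂ := by
  rw [Finsupp.linearCombination_apply, Finsupp.linearCombination_apply, Finsupp.sum, Finsupp.sum,
    sum_inner]
  refine Finset.sum_congr rfl fun i _ => ?_
  rw [inner_sum]
  refine Finset.sum_congr rfl fun j _ => ?_
  rw [inner_smul_left, inner_smul_right]; ring

lemma exists_ext {ι : Type*} (v w s : ι → HH)
    (hd : Dense (Submodule.span ℂ (Set.range v) : Set HH)) (M : ℝ) (hM : 0 ≤ M)
    (h : ∀ i j, ((M ^ 2 : ℝ) : ℂ) * ⟪v i, v j⟫_ℂ = ⟪w i, w j⟫_ℂ + ⟪s i, s j⟫_ℂ) :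
    ∃ T : HH →L[ℂ] HH, ‖T‖ ≤ M ∧ ∀ i, T (v i) = w i := by
  have hde : DenseRange (Finsupp.linearCombination ℂ v) := by
    rw [DenseRange, ← LinearMap.coe_range, Finsupp.range_linearCombination]; exact hd
  have hb : ∀ c, ‖Finsupp.linearCombination ℂ w c‖ ≤ M * ‖Finsupp.linearCombination ℂ v c‖ := by
    intro c
    have h1 : ((M ^ 2 : ℝ) : ℂ) *
        ⟪Finsupp.linearCombination ℂ v c, Finsupp.linearCombination ℂ v c⟫_ℂ =
        ⟪Finsupp.linearCombination ℂ w c, Finsupp.linearCombination ℂ w c⟫_ℂ +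
        ⟪Finsupp.linearCombination ℂ s c, Finsupp.linearCombination ℂ s c⟫_ℂ := by
      rw [inner_linComb, inner_linComb, inner_linComb, Finset.mul_sum, ← Finset.sum_add_distrib]
      refine Finset.sum_congr rfl fun i _ => ?_
      rw [Finset.mul_sum, ← Finset.sum_add_distrib]
      refine Finset.sum_congr rfl fun j _ => ?_
      rw [← mul_add, ← h]; ring
    rw [inner_self_eq_norm_sq_to_K, inner_self_eq_norm_sq_to_K, inner_self_eq_norm_sq_to_K] at h1
    have h2 : M ^ 2 * ‖Finsupp.linearCombination ℂ v c‖ ^ 2 =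
        ‖Finsupp.linearCombination ℂ w c‖ ^ 2 + ‖Finsupp.linearCombination ℂ s c‖ ^ 2 := by
      apply Complex.ofReal_injective
      push_cast at h1 ⊢
      exact h1
    refine le_of_sq_le_sq ?_ (by positivity)
    rw [mul_pow, h2]
    nlinarith [sq_nonneg ‖Finsupp.linearCombination ℂ s c‖]
  refine ⟨(Finsupp.linearCombination ℂ w).extendOfNorm (Finsupp.linearCombination ℂ v),
    LinearMap.opNorm_extendOfNorm_le hde hM hb, fun i => ?_⟩
  have := LinearMap.extendOfNorm_eq hde ⟨M, hb⟩ (Finsupp.single i 1)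
  simpa using this

lemma exists_defect {H : Type*} [NormedAddCommGroup H] [InnerProductSpace ℂ H] [CompleteSpace H]
    (T : H →L[ℂ] H) : ∃ S : H →L[ℂ] H, ∀ x y,
      ((‖T‖ ^ 2 : ℝ) : ℂ) * ⟪x, y⟫_ℂ = ⟪T x, T y⟫_ℂ + ⟪S x, S y⟫_ℂ := by
  have h1 := CStarAlgebra.star_mul_le_algebraMap_norm_sq (a := T)
  rw [← sub_nonneg, CStarAlgebra.nonneg_iff_eq_star_mul_self] at h1
  obtain ⟨S, hS⟩ := h1
  refine ⟨S, fun x y => ?_⟩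
  have h2 : ⟪x, (star S * S) y⟫_ℂ = ⟪S x, S y⟫_ℂ := starOpR S x (S y)
  have h3 : ⟪x, (star T * T) y⟫_ℂ = ⟪T x, T y⟫_ℂ := starOpR T x (T y)
  rw [← h2, ← h3, ← inner_add_right, ← add_apply, ← hS, add_sub_cancel,
    Algebra.algebraMap_eq_smul_one]
  change _ = ⟪x, (‖T‖ ^ 2) • y⟫_ℂ
  rw [← Complex.coe_smul, inner_smul_right]
end Ext3

section Tau
open Filter Topology
variable {H : ℕ → Type*} [∀ i, NormedAddCommGroup (H i)]
    [∀ i, InnerProductSpace ℂ (H i)] [∀ i, CompleteSpace (H i)]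
    {HH : Type*} [NormedAddCommGroup HH] [InnerProductSpace ℂ HH] [CompleteSpace HH]

structure IsITP (ξ : ∀ i, H i) (tp : (n : ℕ) → ((i : Fin n) → H i.val) → HH) : Prop where
  nrm : ∀ i, ‖ξ i‖ = 1
  ml : ∀ (n : ℕ) (x : (i : Fin n) → H i.val) (i : Fin n) (u v : H i.val) (c : ℂ),
      tp n (Function.update x i (c • u + v)) =
        c • tp n (Function.update x i u) + tp n (Function.update x i v)
  inn : ∀ (n : ℕ) (x y : (i : Fin n) → H i.val),
      ⟪tp n x, tp n y⟫_ℂ = ∏ i : Fin n, ⟪x i, y i⟫_ℂ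
  compat : ∀ (n : ℕ) (x : (i : Fin n) → H i.val),
      tp (n + 1) (Fin.snoc x (ξ n)) = tp n x
  dense : Dense (Submodule.span ℂ (⋃ n : ℕ, Set.range (tp n)) : Set HH)

variable {ξ : ∀ i, H i} {tp : (n : ℕ) → ((i : Fin n) → H i.val) → HH}

def tau (tp : (n : ℕ) → ((i : Fin n) → H i.val) → HH) (n : ℕ) (x : ∀ i, H i) : HH :=
  tp n (fun i => x i.val)

lemma tau_congr (n : ℕ) {x y : ∀ i, H i} (h : ∀ i < n, x i = y i) : tau tp n x = tau tp n y := by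
  unfold tau; congr 1; ext i; exact h i i.2

lemma tau_update (n : ℕ) (x : ∀ i, H i) {i : ℕ} (hi : i < n) (u : H i) :
    tau tp n (Function.update x i u) =
      tp n (Function.update (fun j : Fin n => x j.val) ⟨i, hi⟩ u) := by
  unfold tau; congr 1; ext j
  by_cases hj : j = ⟨i, hi⟩
  · subst hj; simp
  · rw [Function.update_of_ne hj, Function.update_of_ne]
    intro h; exact hj (Fin.ext h)

/-- extend a finite family by `ξ` -/
def extd (ξ : ∀ i, H i) (n : ℕ) (x : (i : Fin n) → H i.val) : ∀ i, H i :=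
  fun i => if h : i < n then x ⟨i, h⟩ else ξ i

lemma tp_eq_tau (n : ℕ) (x : (i : Fin n) → H i.val) : tp n x = tau tp n (extd ξ n x) := by
  unfold tau extd; congr 1; ext i; simp

def raise (ξ : ∀ i, H i) (n : ℕ) (x : ∀ i, H i) : ∀ i, H i := fun i => if i < n then x i else ξ i

lemma raise_lt {n i : ℕ} (h : i < n) (x : ∀ i, H i) : raise ξ n x i = x i := by simp [raise, h]
lemma raise_ge {n i : ℕ} (h : n ≤ i) (x : ∀ i, H i) : raise ξ n x i = ξ i := by
  simp [raise, not_lt.2 h]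

namespace IsITP
variable (K : IsITP ξ tp)

lemma tau_inner (K : IsITP ξ tp) (n : ℕ) (x y : ∀ i, H i) :
    ⟪tau tp n x, tau tp n y⟫_ℂ = ∏ i ∈ Finset.range n, ⟪x i, y i⟫_ℂ := by
  unfold tau; rw [K.inn, Finset.prod_range]

lemma tau_succ (K : IsITP ξ tp) (n : ℕ) (x : ∀ i, H i) (h : x n = ξ n) : tau tp (n + 1) x = tau tp n x := by
  unfold tau
  rw [← K.compat n]
  refine congrArg (tp (n + 1)) (funext fun i => ?_)
  refine Fin.lastCases ?_ (fun j => ?_) i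
  · simp [h]
  · simp

lemma tau_mono (K : IsITP ξ tp) {n m : ℕ} (hnm : n ≤ m) (x : ∀ i, H i) (h : ∀ i, n ≤ i → x i = ξ i) :
    tau tp m x = tau tp n x := by
  induction m, hnm using Nat.le_induction with
  | base => rfl
  | succ k hk ih => rw [K.tau_succ k x (h k hk), ih]

lemma tau_raise (K : IsITP ξ tp) {n m : ℕ} (hnm : n ≤ m) (x : ∀ i, H i) :
    tau tp m (raise ξ n x) = tau tp n x := by
  rw [K.tau_mono hnm _ (fun i hi => raise_ge hi x)]
  exact tau_congr n fun i hi => raise_lt hi x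

lemma tau_lin (K : IsITP ξ tp) (n : ℕ) (x : ∀ i, H i) {i : ℕ} (hi : i < n) (c : ℂ) (u v : H i) :
    tau tp n (Function.update x i (c • u + v)) =
      c • tau tp n (Function.update x i u) + tau tp n (Function.update x i v) := by
  rw [tau_update n x hi, tau_update n x hi, tau_update n x hi, K.ml]

lemma tau_add (K : IsITP ξ tp) (n : ℕ) (x : ∀ i, H i) {i : ℕ} (hi : i < n) (u v : H i) :
    tau tp n (Function.update x i (u + v)) =
      tau tp n (Function.update x i u) + tau tp n (Function.update x i v) := by
  simpa using K.tau_lin n x hi 1 u v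

lemma tau_zero (K : IsITP ξ tp) (n : ℕ) (x : ∀ i, H i) {i : ℕ} (hi : i < n) :
    tau tp n (Function.update x i 0) = 0 := by
  have := K.tau_add n x hi 0 0
  simpa using this

lemma tau_smul (K : IsITP ξ tp) (n : ℕ) (x : ∀ i, H i) {i : ℕ} (hi : i < n) (c : ℂ) (u : H i) :
    tau tp n (Function.update x i (c • u)) = c • tau tp n (Function.update x i u) := by
  have := K.tau_lin n x hi c u 0
  simpa [K.tau_zero n x hi] using this

lemma tau_neg (K : IsITP ξ tp) (n : ℕ) (x : ∀ i, H i) {i : ℕ} (hi : i < n) (u : H i) :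
    tau tp n (Function.update x i (-u)) = - tau tp n (Function.update x i u) := by
  have := K.tau_smul n x hi (-1) u
  simpa using this

lemma dense_tau (K : IsITP ξ tp) (m0 : ℕ) :
    Dense (Submodule.span ℂ {z : HH | ∃ m x, m0 ≤ m ∧ (∀ i, m ≤ i → x i = ξ i) ∧ z = tau tp m x} :
      Set HH) := by
  refine K.dense.mono ?_
  change Submodule.span _ _ ≤ Submodule.span _ _
  refine Submodule.span_mono ?_
  rintro z hz
  simp only [Set.mem_iUnion, Set.mem_range] at hz
  obtain ⟨n, x, rfl⟩ := hz
  refine ⟨max n m0, raise ξ n (extd ξ n x), le_max_right _ _,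
    fun i hi => raise_ge ((le_max_left _ _).trans hi) _, ?_⟩
  rw [K.tau_raise (le_max_left _ _), ← tp_eq_tau]

lemma op_ext (K : IsITP ξ tp) (m0 : ℕ) {S T : HH →L[ℂ] HH}
    (h : ∀ m x, m0 ≤ m → S (tau tp m x) = T (tau tp m x)) : S = T := by
  refine ContinuousLinearMap.ext_on (K.dense_tau m0) ?_
  rintro _ ⟨m, x, hm, -, rfl⟩
  exact h m x hm

lemma vec_ext (K : IsITP ξ tp) (m0 : ℕ) {u v : HH}
    (h : ∀ m x, m0 ≤ m → ⟪tau tp m x, u⟫_ℂ = ⟪tau tp m x, v⟫_ℂ) : u = v := by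
  refine (K.dense_tau m0).eq_of_inner_right (𝕜 := ℂ) ?_
  intro z hz
  induction hz using Submodule.span_induction with
  | mem z hz => obtain ⟨m, x, hm, -, rfl⟩ := hz; exact h m x hm
  | zero => simp
  | add x y _ _ hx hy => rw [inner_add_left, inner_add_left, hx, hy]
  | smul c x _ hx => rw [inner_smul_left, inner_smul_left, hx]

lemma prod_update (K : IsITP ξ tp) (M : ℕ) {i : ℕ} (hi : i < M) (x y : ∀ i, H i) (u v : H i) :
    ⟪tau tp M (Function.update x i u), tau tp M (Function.update y i v)⟫_ℂ =
      ⟪u, v⟫_ℂ * ∏ j ∈ (Finset.range M).erase i, ⟪x j, y j⟫_ℂ := by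
  rw [K.tau_inner, ← Finset.mul_prod_erase _ _ (Finset.mem_range.2 hi)]
  simp only [Function.update_self]
  congr 1
  refine Finset.prod_congr rfl fun j hj => ?_
  have := Finset.ne_of_mem_erase hj
  rw [Function.update_of_ne this, Function.update_of_ne this]

lemma exists_pi (K : IsITP ξ tp) (i : ℕ) (T : H i →L[ℂ] H i) : ∃ P : HH →L[ℂ] HH, ‖P‖ ≤ ‖T‖ ∧
    ∀ m x, i < m → P (tau tp m x) = tau tp m (Function.update x i (T (x i))) := by
  let ι := {p : ℕ × (∀ i, H i) // i < p.1 ∧ ∀ j, p.1 ≤ j → p.2 j = ξ j}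
  let w : (H i →L[ℂ] H i) → ι → HH :=
    fun T p => tau tp p.1.1 (Function.update p.1.2 i (T (p.1.2 i)))
  let v : ι → HH := fun p => tau tp p.1.1 p.1.2
  have hv : v = w 1 := by ext p; simp [v, w]
  have hinn : ∀ (p q : ι), ∃ c : ℂ, ∀ T S, ⟪w T p, w S q⟫_ℂ = ⟪T (p.1.2 i), S (q.1.2 i)⟫_ℂ * c := by
    rintro ⟨⟨m, x⟩, hm, hx⟩ ⟨⟨n, y⟩, hn, hy⟩
    refine ⟨∏ j ∈ (Finset.range (max m n)).erase i, ⟪x j, y j⟫_ℂ, fun T S => ?_⟩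
    simp only [w]
    rw [← K.tau_mono (le_max_left m n), ← K.tau_mono (le_max_right m n) (Function.update y _ _)]
    · rw [K.prod_update _ (lt_max_of_lt_left hm)]
    · intro j hj
      rw [Function.update_of_ne]; · exact hy j hj
      simp only at hn; omega
    · intro j hj
      rw [Function.update_of_ne]; · exact hx j hj
      simp only at hm; omega
  obtain ⟨S, hS⟩ := exists_defect T
  obtain ⟨P, hPn, hP⟩ := exists_ext v (w T) (w S) (by
    refine (K.dense_tau (i + 1)).mono ?_
    change Submodule.span _ _ ≤ Submodule.span _ _
    refine Submodule.span_mono ?_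
    rintro z ⟨m, x, hm, hx, rfl⟩
    exact ⟨⟨(m, x), hm, hx⟩, rfl⟩) ‖T‖ (norm_nonneg _) (by
    intro p q
    obtain ⟨c, hc⟩ := hinn p q
    rw [hv, hc, hc, hc, ← add_mul, ← hS, ← mul_assoc]; rfl)
  refine ⟨P, hPn, fun m x hm => ?_⟩
  have h1 := hP ⟨(m, raise ξ m x), hm, fun j hj => raise_ge hj x⟩
  simp only [v, w] at h1
  rw [K.tau_raise le_rfl] at h1
  rw [h1]
  refine tau_congr m fun j hj => ?_
  by_cases hji : j = i
  · subst hji; simp [raise_lt hj]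
  · simp [Function.update_of_ne hji, raise_lt hj]

/-- The representation of operators on the `i`-th site. -/
def pi (i : ℕ) (T : H i →L[ℂ] H i) : HH →L[ℂ] HH := (K.exists_pi i T).choose

lemma norm_pi (K : IsITP ξ tp) (i : ℕ) (T : H i →L[ℂ] H i) : ‖K.pi i T‖ ≤ ‖T‖ := (K.exists_pi i T).choose_spec.1
lemma pi_tau (K : IsITP ξ tp) {i m : ℕ} (h : i < m) (T : H i →L[ℂ] H i) (x : ∀ i, H i) :
    K.pi i T (tau tp m x) = tau tp m (Function.update x i (T (x i))) :=
  (K.exists_pi i T).choose_spec.2 m x h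

lemma pi_one (K : IsITP ξ tp) (i : ℕ) : K.pi i 1 = 1 := by
  refine K.op_ext (i + 1) fun m x hm => ?_
  rw [K.pi_tau hm]; simp
lemma pi_mul (K : IsITP ξ tp) (i : ℕ) (S T : H i →L[ℂ] H i) : K.pi i (S * T) = K.pi i S * K.pi i T := by
  refine K.op_ext (i + 1) fun m x hm => ?_
  change _ = K.pi i S (K.pi i T _)
  rw [K.pi_tau hm, K.pi_tau hm, K.pi_tau hm]; simp
lemma pi_add (K : IsITP ξ tp) (i : ℕ) (S T : H i →L[ℂ] H i) : K.pi i (S + T) = K.pi i S + K.pi i T := by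
  refine K.op_ext (i + 1) fun m x hm => ?_
  rw [add_apply, K.pi_tau hm, K.pi_tau hm, K.pi_tau hm,
    add_apply, K.tau_add m x hm]
lemma pi_smul (K : IsITP ξ tp) (i : ℕ) (c : ℂ) (T : H i →L[ℂ] H i) : K.pi i (c • T) = c • K.pi i T := by
  refine K.op_ext (i + 1) fun m x hm => ?_
  rw [smul_apply, K.pi_tau hm, K.pi_tau hm,
    smul_apply, K.tau_smul m x hm]
lemma pi_neg (K : IsITP ξ tp) (i : ℕ) (T : H i →L[ℂ] H i) : K.pi i (-T) = - K.pi i T := by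
  have := K.pi_smul i (-1) T
  simpa using this
lemma pi_star (K : IsITP ξ tp) (i : ℕ) (T : H i →L[ℂ] H i) : K.pi i (star T) = star (K.pi i T) := by
  refine K.op_ext (i + 1) fun m x hm => ?_
  refine K.vec_ext m fun n y hn => ?_
  have hin : i < n := lt_of_lt_of_le hm hn
  rw [starOpR, ← K.tau_raise hn x, K.pi_tau hin, K.pi_tau hin]
  have h1 := K.prod_update n hin y (raise ξ m x) (y i) (star T (raise ξ m x i))
  have h2 := K.prod_update n hin y (raise ξ m x) (T (y i)) (raise ξ m x i)
  rw [Function.update_eq_self] at h1 h2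
  rw [h1, h2, starOpR]
lemma pi_comm (K : IsITP ξ tp) {i j : ℕ} (hij : i ≠ j) (S : H i →L[ℂ] H i) (T : H j →L[ℂ] H j) :
    K.pi i S * K.pi j T = K.pi j T * K.pi i S := by
  refine K.op_ext (max (i + 1) (j + 1)) fun m x hm => ?_
  change K.pi i S (K.pi j T _) = K.pi j T (K.pi i S _)
  have hi : i < m := lt_of_lt_of_le (Nat.lt_succ_self i) ((le_max_left _ _).trans hm)
  have hj : j < m := lt_of_lt_of_le (Nat.lt_succ_self j) ((le_max_right _ _).trans hm)
  rw [K.pi_tau hj, K.pi_tau hi, K.pi_tau hi, K.pi_tau hj, Function.update_of_ne hij,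
    Function.update_of_ne hij.symm, Function.update_comm hij]

/-- product of site operators -/
def pr (T : ∀ i, H i →L[ℂ] H i) : ℕ → (HH →L[ℂ] HH)
  | 0 => 1
  | n + 1 => pr T n * K.pi n (T n)

lemma pr_tau (K : IsITP ξ tp) (T : ∀ i, H i →L[ℂ] H i) (n m : ℕ) (h : n ≤ m) (x : ∀ i, H i) :
    K.pr T n (tau tp m x) = tau tp m (fun i => if i < n then T i (x i) else x i) := by
  induction n generalizing x with
  | zero => simp [pr]
  | succ n ih =>
    change K.pr T n (K.pi n (T n) _) = _
    rw [K.pi_tau h, ih (by omega)]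
    refine tau_congr m fun i hi => ?_
    by_cases hin : i = n
    · subst hin; simp
    · rw [Function.update_of_ne hin]
      have : i < n ↔ i < n + 1 := by omega
      simp [this]

lemma pr_tau' (K : IsITP ξ tp) (T : ∀ i, H i →L[ℂ] H i) (n : ℕ) (x : ∀ i, H i) :
    K.pr T n (tau tp n x) = tau tp n (fun i => T i (x i)) := by
  rw [K.pr_tau T n n le_rfl]
  exact tau_congr n fun i hi => by simp [hi]

lemma pr_norm (K : IsITP ξ tp) (T : ∀ i, H i →L[ℂ] H i) (n : ℕ) (hT : ∀ i, ‖T i‖ ≤ 1) : ‖K.pr T n‖ ≤ 1 := by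
  induction n with
  | zero => exact ContinuousLinearMap.norm_id_le
  | succ n ih =>
    refine (norm_mul_le _ _).trans ?_
    exact mul_le_one₀ ih (norm_nonneg _) ((K.norm_pi _ _).trans (hT n))

lemma pr_commute (K : IsITP ξ tp) {n : ℕ} {T : ∀ i, H i →L[ℂ] H i} {x : HH →L[ℂ] HH}
    (h : ∀ i < n, Commute (K.pi i (T i)) x) : Commute (K.pr T n) x := by
  induction n with
  | zero => exact Commute.one_left x
  | succ n ih =>
    exact (ih fun i hi => h i (by omega)).mul_left (h n (by omega))

lemma pr_star (K : IsITP ξ tp) (T : ∀ i, H i →L[ℂ] H i) (n : ℕ) :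
    star (K.pr T n) = K.pr (fun i => star (T i)) n := by
  induction n with
  | zero => simp [pr]
  | succ n ih =>
    simp only [pr, star_mul, ih, ← K.pi_star]
    exact (K.pr_commute fun i hi => K.pi_comm (by omega) _ _).symm.eq

/-- subspace of the first `n` sites -/
def sub (_ : IsITP ξ tp) (n : ℕ) : Submodule ℂ HH :=
  (Submodule.span ℂ (Set.range (tau tp n))).topologicalClosure

instance (n : ℕ) : CompleteSpace (K.sub n) :=
  (Submodule.isClosed_topologicalClosure _).completeSpace_coe

lemma tau_mem_sub (K : IsITP ξ tp) (n : ℕ) (x : ∀ i, H i) : tau tp n x ∈ K.sub n :=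
  Submodule.le_topologicalClosure _ (Submodule.subset_span ⟨x, rfl⟩)

lemma sub_mono (K : IsITP ξ tp) : Monotone K.sub := by
  intro n m hnm
  refine Submodule.topologicalClosure_mono (Submodule.span_mono ?_)
  rintro _ ⟨x, rfl⟩
  exact ⟨raise ξ n x, K.tau_raise hnm x⟩

lemma sub_inv (K : IsITP ξ tp) {n : ℕ} {a : HH →L[ℂ] HH} (h : ∀ x, a (tau tp n x) ∈ K.sub n) :
    ∀ z ∈ K.sub n, a z ∈ K.sub n := by
  intro z hz
  refine closure_span_induction (a ⁻¹' (K.sub n : Set HH))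
    ((Submodule.isClosed_topologicalClosure _).preimage a.continuous) ?_ ?_ ?_ ?_ hz
  · simp
  · intro x hx y hy
    simp only [Set.mem_preimage, map_add] at *
    exact Submodule.add_mem _ hx hy
  · intro c x hx
    simp only [Set.mem_preimage, map_smul] at *
    exact Submodule.smul_mem _ c hx
  · rintro _ ⟨x, rfl⟩
    exact h x

/-- projection on the first `n` sites -/
def P (n : ℕ) : HH →L[ℂ] HH := (K.sub n).starProjection

lemma P_star (K : IsITP ξ tp) (n : ℕ) : star (K.P n) = K.P n := by
  rw [ContinuousLinearMap.star_eq_adjoint, eq_comm, ContinuousLinearMap.eq_adjoint_iff]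
  intro x y
  exact Submodule.inner_starProjection_left_eq_right _ x y
lemma P_mem (K : IsITP ξ tp) (n : ℕ) (x : HH) : K.P n x ∈ K.sub n := Submodule.starProjection_apply_mem _ _
lemma P_fix (K : IsITP ξ tp) {n : ℕ} {x : HH} (h : x ∈ K.sub n) : K.P n x = x :=
  Submodule.starProjection_eq_self_iff.2 h
lemma P_tau (K : IsITP ξ tp) (n : ℕ) (x : ∀ i, H i) : K.P n (tau tp n x) = tau tp n x := K.P_fix (K.tau_mem_sub n x)
lemma P_idem (K : IsITP ξ tp) (n : ℕ) : K.P n * K.P n = K.P n := by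
  ext x; exact K.P_fix (K.P_mem n x)
lemma P_lim (K : IsITP ξ tp) (x : HH) : Tendsto (fun n => K.P n x) atTop (𝓝 x) := by
  refine Submodule.starProjection_tendsto_self K.sub K.sub_mono x ?_
  rw [top_le_iff, ← Submodule.dense_iff_topologicalClosure_eq_top]
  refine (K.dense_tau 0).mono ?_
  change Submodule.span _ _ ≤ _
  rw [Submodule.span_le]
  rintro z ⟨m, x, -, -, rfl⟩
  exact Submodule.mem_iSup_of_mem m (K.tau_mem_sub m x)

lemma P_pi (K : IsITP ξ tp) {i n : ℕ} (h : i < n) (T : H i →L[ℂ] H i) : Commute (K.pi i T) (K.P n) := by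
  refine starProjection_commute _ _ (K.sub_inv ?_) (K.sub_inv ?_)
  · intro x; rw [K.pi_tau h]; exact K.tau_mem_sub _ _
  · intro x; rw [← K.pi_star, K.pi_tau h]; exact K.tau_mem_sub _ _

lemma P_pr (K : IsITP ξ tp) (T : ∀ i, H i →L[ℂ] H i) (n : ℕ) : Commute (K.pr T n) (K.P n) :=
  K.pr_commute fun _ hi => K.P_pi hi _

lemma eq_on_sub (K : IsITP ξ tp) {n : ℕ} {S T : HH →L[ℂ] HH} (h : ∀ x, S (tau tp n x) = T (tau tp n x)) :
    S * K.P n = T * K.P n := by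
  ext z
  change S (K.P n z) = T (K.P n z)
  have := K.P_mem n z
  refine closure_span_induction {z | S z = T z} (isClosed_eq S.continuous T.continuous)
    (by simp) ?_ ?_ ?_ this
  · intro x hx y hy
    simp only [Set.mem_ofPred_eq, map_add] at *; rw [hx, hy]
  · intro c x hx
    simp only [Set.mem_ofPred_eq, map_smul] at *; rw [hx]
  · rintro _ ⟨x, rfl⟩; exact h x

/-- conjugation on the tensor product -/
lemma exists_J (K : IsITP ξ tp) (J : ∀ i, H i →L⋆[ℂ] H i) (hJ : ∀ i, AConj (J i)) (hJξ : ∀ i, J i (ξ i) = ξ i) :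
    ∃ JJ : HH →L⋆[ℂ] HH, AConj JJ ∧
      ∀ m x, JJ (tau tp m x) = tau tp m (fun i => J i (x i)) := by
  have h0 : ‖tau tp 0 ξ‖ = 1 := by
    have := K.tau_inner 0 ξ ξ
    rw [inner_self_eq_norm_sq_to_K] at this
    simp only [Finset.range_zero, Finset.prod_empty] at this
    have h2 : ‖tau tp 0 ξ‖ ^ 2 = 1 := by
      apply Complex.ofReal_injective
      push_cast
      exact this
    nlinarith [norm_nonneg (tau tp 0 ξ)]
  obtain ⟨J0, hJ0, -⟩ := exists_conj (tau tp 0 ξ) h0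
  let ι := {p : ℕ × (∀ i, H i) // ∀ j, p.1 ≤ j → p.2 j = ξ j}
  let v : ι → HH := fun p => J0 (tau tp p.1.1 p.1.2)
  let w : ι → HH := fun p => tau tp p.1.1 (fun i => J i (p.1.2 i))
  have hvw : ∀ p q, ⟪v p, v q⟫_ℂ = ⟪w p, w q⟫_ℂ := by
    rintro ⟨⟨m, x⟩, hx⟩ ⟨⟨n, y⟩, hy⟩
    simp only [v, w]
    rw [hJ0.inn, ← K.tau_mono (le_max_left m n) x hx, ← K.tau_mono (le_max_right m n) y hy,
      ← K.tau_mono (le_max_left m n) (fun i => J i (x i)) (fun i hi => by have := hx i hi; simp only at this; rw [this, hJξ]),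
      ← K.tau_mono (le_max_right m n) (fun i => J i (y i)) (fun i hi => by have := hy i hi; simp only at this; rw [this, hJξ]),
      K.tau_inner, K.tau_inner]
    exact Finset.prod_congr rfl fun i _ => ((hJ i).inn _ _).symm
  have hdense : Dense (Submodule.span ℂ (Set.range v) : Set HH) := by
    intro z
    have h1 := K.dense_tau 0 (J0 z)
    have h2 := image_closure_subset_closure_image J0.continuous ⟨_, h1, rfl⟩
    rw [hJ0.inv] at h2
    refine closure_mono ?_ h2
    rintro _ ⟨y, hy, rfl⟩
    change J0 y ∈ Submodule.span _ _
    change y ∈ Submodule.span _ _ at hy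
    induction hy using Submodule.span_induction with
    | mem z hz => obtain ⟨m, x, hm, hx, rfl⟩ := hz; exact Submodule.subset_span ⟨⟨(m, x), hx⟩, rfl⟩
    | zero => simp
    | add x y _ _ hx hy => rw [map_add]; exact Submodule.add_mem _ hx hy
    | smul c x _ hx => rw [ContinuousLinearMap.map_smulₛₗ]; exact Submodule.smul_mem _ _ hx
  obtain ⟨T, -, hT⟩ := exists_ext v w (fun _ => 0) hdense 1 zero_le_one (by
    intro p q; rw [hvw]; simp)
  have hTs : star T * T = 1 := by
    refine ContinuousLinearMap.ext_on hdense ?_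
    rintro _ ⟨p, rfl⟩
    refine hdense.eq_of_inner_right (𝕜 := ℂ) ?_
    intro z hz
    change ⟪z, star T (T (v p))⟫_ℂ = ⟪z, v p⟫_ℂ
    induction hz using Submodule.span_induction with
    | mem z hz => obtain ⟨q, rfl⟩ := hz; rw [starOpR, hT, hT, hvw]
    | zero => simp
    | add x y _ _ hx hy => rw [inner_add_left, inner_add_left, hx, hy]
    | smul c x _ hx => rw [inner_smul_left, inner_smul_left, hx]
  have htau : ∀ m x, (T.comp J0) (tau tp m x) = tau tp m (fun i => J i (x i)) := by
    intro m x
    have h1 := hT ⟨(m, raise ξ m x), fun j hj => raise_ge hj x⟩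
    simp only [v, w] at h1
    rw [K.tau_raise le_rfl] at h1
    change T (J0 _) = _
    rw [h1]
    exact tau_congr m fun j hj => by rw [raise_lt hj]
  refine ⟨T.comp J0, ⟨?_, ?_⟩, htau⟩
  · intro z
    have h1 : ((T.comp J0).comp (T.comp J0) : HH →L[ℂ] HH) = 1 := by
      refine K.op_ext 0 fun m x _ => ?_
      change (T.comp J0) ((T.comp J0) _) = _
      rw [htau, htau]
      simp only [(hJ _).inv]
      rfl
    exact DFunLike.congr_fun h1 z
  · intro x y
    change ⟪T (J0 x), T (J0 y)⟫_ℂ = _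
    rw [← starOpR]
    have : star T (T (J0 y)) = J0 y := DFunLike.congr_fun hTs (J0 y)
    rw [this, hJ0.inn]

end IsITP
end Tau

section Ungraded
open Filter Topology
variable {H : ℕ → Type*} [∀ i, NormedAddCommGroup (H i)]
    [∀ i, InnerProductSpace ℂ (H i)] [∀ i, CompleteSpace (H i)]
    {HH : Type*} [NormedAddCommGroup HH] [InnerProductSpace ℂ HH] [CompleteSpace HH]
variable {ξ : ∀ i, H i} {tp : (n : ℕ) → ((i : Fin n) → H i.val) → HH}
namespace IsITP
variable (K : IsITP ξ tp)

lemma tau_cont (K : IsITP ξ tp) (n : ℕ) : Continuous (fun x : (∀ i, H i) => tau tp n x) := by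
  let f : MultilinearMap ℂ (fun i : Fin n => H i.val) HH :=
    { toFun := tp n
      map_update_add' := by
        intro inst x i u v
        rw [Subsingleton.elim inst (fun a b => instDecidableEqFin n a b)]
        simpa using K.ml n x i u v 1
      map_update_smul' := by
        intro inst x i c u
        rw [Subsingleton.elim inst (fun a b => instDecidableEqFin n a b)]
        have h0 := K.ml n x i 0 0 1
        have h1 := K.ml n x i u 0 c
        simp only [smul_zero, add_zero, one_smul, left_eq_add] at h0 h1
        rw [h1, h0, add_zero] }
  have hn : ∀ x, ‖f x‖ ≤ 1 * ∏ i, ‖x i‖ := by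
    intro x
    have h1 : ((‖tp n x‖ ^ 2 : ℝ) : ℂ) = (((∏ i, ‖x i‖) ^ 2 : ℝ) : ℂ) := by
      have := K.inn n x x
      simp only [inner_self_eq_norm_sq_to_K] at this
      rw [Finset.prod_pow] at this
      push_cast
      exact this
    have h2 : ‖tp n x‖ ^ 2 = (∏ i, ‖x i‖) ^ 2 := Complex.ofReal_injective h1
    rw [one_mul]
    exact (pow_le_pow_iff_left₀ (norm_nonneg _) (Finset.prod_nonneg fun _ _ => norm_nonneg _)
      two_ne_zero).1 h2.le
  have hc : Continuous (tp n) := (f.mkContinuous 1 hn).cont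
  exact hc.comp (by fun_prop)

lemma clos (K : IsITP ξ tp) (n : ℕ) {A : ∀ i, Set (H i →L[ℂ] H i)} {x : HH →L[ℂ] HH}
    (hx : ∀ i < n, ∀ a ∈ A i, Commute (K.pi i a) x) (ω ω' : ∀ i, H i) (z : ∀ i, H i × H i)
    (hz : ∀ i, z i ∈ closure {z : H i × H i | ∃ a ∈ A i, z = (a (ω i), star a (ω' i))}) :
    ⟪tau tp n (fun i => (z i).1), star x (tau tp n ω')⟫_ℂ =
      ⟪x (tau tp n ω), tau tp n (fun i => (z i).2)⟫_ℂ := by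
  have hcl : IsClosed {z : ∀ i, H i × H i |
      ⟪tau tp n (fun i => (z i).1), star x (tau tp n ω')⟫_ℂ =
      ⟪x (tau tp n ω), tau tp n (fun i => (z i).2)⟫_ℂ} := by
    have c1 : Continuous (fun (z : ∀ i, H i × H i) => fun i => (z i).1) := by fun_prop
    have c2 : Continuous (fun (z : ∀ i, H i × H i) => fun i => (z i).2) := by fun_prop
    refine isClosed_eq ?_ ?_
    · exact ((K.tau_cont n).comp c1).inner continuous_const
    · exact continuous_const.inner ((K.tau_cont n).comp c2)
  have hz' : z ∈ closure (Set.pi Set.univ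
      (fun i => {z : H i × H i | ∃ a ∈ A i, z = (a (ω i), star a (ω' i))})) := by
    rw [closure_pi_set]
    exact fun i _ => hz i
  refine hcl.closure_subset_iff.2 ?_ hz'
  intro z hz
  choose a ha hza using fun i => hz i (Set.mem_univ i)
  have hz2 : z = fun i => (a i (ω i), star (a i) (ω' i)) := funext hza
  subst hz2
  have hc : Commute (K.pr a n) x := K.pr_commute fun i hi => hx i hi _ (ha i)
  change ⟪tau tp n (fun i => a i (ω i)), _⟫_ℂ = ⟪_, tau tp n (fun i => star (a i) (ω' i))⟫_ℂ
  rw [← K.pr_tau', ← K.pr_tau' (fun i => star (a i)), ← K.pr_star, starOpR, starOpR]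
  have : x (K.pr a n (tau tp n ω)) = K.pr a n (x (tau tp n ω)) :=
    (DFunLike.congr_fun hc.eq (tau tp n ω)).symm
  rw [this]

lemma P_J (K : IsITP ξ tp) {J : HH →L⋆[ℂ] HH} (hJ : AConj J) {n : ℕ} (h : ∀ x, J (tau tp n x) ∈ K.sub n) (z : HH) :
    K.P n (J z) = J (K.P n z) := by
  have hinv : ∀ z ∈ K.sub n, J z ∈ K.sub n := by
    intro z hz
    refine closure_span_induction (J ⁻¹' (K.sub n : Set HH))
      ((Submodule.isClosed_topologicalClosure _).preimage J.continuous) ?_ ?_ ?_ ?_ hz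
    · simp
    · intro x hx y hy
      simp only [Set.mem_preimage, map_add] at *
      exact Submodule.add_mem _ hx hy
    · intro c x hx
      simp only [Set.mem_preimage, ContinuousLinearMap.map_smulₛₗ] at *
      exact Submodule.smul_mem _ _ hx
    · rintro _ ⟨x, rfl⟩
      exact h x
  have h3 : J (z - K.P n z) ∈ (K.sub n)ᗮ := by
    rw [Submodule.mem_orthogonal']
    intro w hw
    rw [← hJ.inv w, hJ.inn]
    exact (Submodule.mem_orthogonal _ _).1 ((K.sub n).sub_starProjection_mem_orthogonal z) _
      (hinv w hw)
  have hz : J z = J (K.P n z) + J (z - K.P n z) := by rw [← map_add]; congr 1; abel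
  have h4 : K.P n (J (z - K.P n z)) = 0 := (Submodule.starProjection_apply_eq_zero_iff _).2 h3
  rw [hz, map_add, h4, add_zero, K.P_fix (hinv _ (K.P_mem n z))]

lemma sub_ext (K : IsITP ξ tp) {n : ℕ} {u v : HH}
    (h : ∀ x, ⟪tau tp n x, u⟫_ℂ = ⟪tau tp n x, v⟫_ℂ) : K.P n u = K.P n v := by
  rw [← sub_eq_zero, ← map_sub]
  refine (Submodule.starProjection_apply_eq_zero_iff _).2 ?_
  rw [Submodule.mem_orthogonal]
  intro w hw
  refine closure_span_induction {w | ⟪w, u - v⟫_ℂ = 0} (isClosed_eq (by fun_prop) (by fun_prop))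
    (by simp) ?_ ?_ ?_ hw
  · intro x hx y hy
    simp only [Set.mem_ofPred_eq, inner_add_left] at *; rw [hx, hy, add_zero]
  · intro c x hx
    simp only [Set.mem_ofPred_eq, inner_smul_left] at *; rw [hx, mul_zero]
  · rintro _ ⟨x, rfl⟩
    simp only [Set.mem_ofPred_eq, inner_sub_right]; rw [h x, sub_self]

lemma P_inner (K : IsITP ξ tp) (n : ℕ) (u v : HH) : ⟪K.P n u, v⟫_ℂ = ⟪u, K.P n v⟫_ℂ := by
  have := starOpL (K.P n) u v
  rwa [K.P_star] at this

/-- The ungraded finite commutation theorem. -/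
lemma ungraded (K : IsITP ξ tp) (n : ℕ) {A B : ∀ i, Set (H i →L[ℂ] H i)} (hAB : ∀ i, VNPair (A i) (B i))
    {x y : HH →L[ℂ] HH}
    (hx : ∀ i < n, ∀ a ∈ A i, Commute (K.pi i a) x)
    (hy : ∀ i < n, ∀ b ∈ B i, Commute (K.pi i b) y) :
    K.P n * y * K.P n * x * K.P n = K.P n * x * K.P n * y * K.P n := by
  choose J hJ hJξ using fun i => exists_conj (ξ i) (K.nrm i)
  obtain ⟨JJ, hJJ, hJt⟩ := K.exists_J J hJ hJξ
  have key : ∀ ω ω' : ∀ i, H i, ⟪K.P n (x (tau tp n ω)), star y (tau tp n ω')⟫_ℂ =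
      ⟪K.P n (y (tau tp n ω)), star x (tau tp n ω')⟫_ℂ := by
    intro ω ω'
    let S := fun i => Classical.choice (exists_siteData (hAB i) (hJ i) (ω i) (ω' i))
    set p := x (tau tp n ω) with hp
    set q := star x (tau tp n ω') with hq
    set r := y (tau tp n ω) with hr
    set s := star y (tau tp n ω') with hs
    let C : ℕ → HH →L[ℂ] HH := fun m => K.pr (fun i => (S i).C m) n
    let C' : ℕ → HH →L[ℂ] HH := fun m => K.pr (fun i => (S i).C' m) n
    let D : ℕ → HH →L[ℂ] HH := fun m => K.pr (fun i => (S i).D m) n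
    let E : HH →L[ℂ] HH := K.pr (fun i => (S i).e) n
    let E' : HH →L[ℂ] HH := K.pr (fun i => (S i).e') n
    let F : HH →L[ℂ] HH := K.pr (fun i => (S i).f) n
    have hCs : ∀ m, star (C m) = C m := by
      intro m; simp only [C]; rw [K.pr_star]; simp only [(S _).sC]
    have hE's : star E' = E' := by
      simp only [E']; rw [K.pr_star]; simp only [(S _).hes]
    have hFp : F p = p := by
      have h1 : F (x (tau tp n ω)) = x (F (tau tp n ω)) := DFunLike.congr_fun
        (K.pr_commute (T := fun i => (S i).f) (fun i hi => hx i hi _ (S i).hf)).eq (tau tp n ω)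
      rw [hp, h1, K.pr_tau']
      simp only [(S _).hfω]
    have hEr : E r = r := by
      have h1 : E (y (tau tp n ω)) = y (E (tau tp n ω)) := DFunLike.congr_fun
        (K.pr_commute (T := fun i => (S i).e) (fun i hi => hy i hi _ (S i).he)).eq (tau tp n ω)
      rw [hr, h1, K.pr_tau']
      simp only [(S _).heω]
    have hE'sv : E' s = s := by
      have h0 : Commute E' (star y) := by
        have := (K.pr_commute (T := fun i => (S i).e') (fun i hi => hy i hi _ (S i).he')).star_star
        change Commute (star E') (star y) at this
        rwa [hE's] at this
      have h1 : E' (star y (tau tp n ω')) = star y (E' (tau tp n ω')) :=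
        DFunLike.congr_fun h0.eq (tau tp n ω')
      rw [hs, h1, K.pr_tau']
      simp only [(S _).heω']
    -- relation (a)
    have ha : ∀ m, K.P n (C m q) = K.P n (star (D m) (JJ p)) := by
      intro m
      refine K.sub_ext fun h => ?_
      have h1 := K.clos n hx ω ω' (fun i => ((S i).C m (h i), J i ((S i).D m (h i))))
        (fun i => (S i).memA m (h i))
      have h2 : C m (tau tp n h) = tau tp n (fun i => (S i).C m (h i)) := K.pr_tau' _ _ _
      have h3 : JJ (D m (tau tp n h)) = tau tp n (fun i => J i ((S i).D m (h i))) := by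
        simp only [D]; rw [K.pr_tau', hJt]
      simp only at h1
      rw [← h2, ← h3] at h1
      rw [← hCs, starOpR, h1, starOpR, ← hp, ← hJJ.inn (JJ p), hJJ.inv]
    -- relation (b)
    have hb : ∀ m, ∀ z ∈ K.sub n, ⟪C' m z, s⟫_ℂ = ⟪r, star (D m) (JJ z)⟫_ℂ := by
      intro m z hz
      refine closure_span_induction {z | ⟪C' m z, s⟫_ℂ = ⟪r, star (D m) (JJ z)⟫_ℂ}
        (isClosed_eq ?_ ?_) (by simp) ?_ ?_ ?_ hz
      · exact (C' m).continuous.inner continuous_const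
      · exact continuous_const.inner ((star (D m)).continuous.comp JJ.continuous)
      · intro u hu v hv
        simp only [Set.mem_ofPred_eq, map_add, inner_add_left, inner_add_right] at *
        rw [hu, hv]
      · intro c u hu
        simp only [Set.mem_ofPred_eq, map_smul, ContinuousLinearMap.map_smulₛₗ, inner_smul_left,
          inner_smul_right] at *
        rw [hu]
      · rintro _ ⟨h, rfl⟩
        have h1 := K.clos n hy ω ω' (fun i => ((S i).C' m (h i), star ((S i).D m) (J i (h i))))
          (fun i => (S i).memB m (h i))
        have h2 : C' m (tau tp n h) = tau tp n (fun i => (S i).C' m (h i)) := K.pr_tau' _ _ _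
        have h3 : star (D m) (JJ (tau tp n h)) =
            tau tp n (fun i => star ((S i).D m) (J i (h i))) := by
          simp only [D]; rw [K.pr_star, hJt, K.pr_tau']
        simp only at h1
        rw [← h2, ← h3] at h1
        exact h1
    have hcomm : ∀ (T : ∀ i, H i →L[ℂ] H i) z, K.P n (K.pr T n z) = K.pr T n (K.P n z) :=
      fun T z => (DFunLike.congr_fun (K.P_pr T n).eq z).symm
    have hab : ∀ m, ⟪C' m (K.P n p), s⟫_ℂ = ⟪C m (K.P n r), q⟫_ℂ := by
      intro m
      have hD : star (D m) (K.P n (JJ p)) = K.P n (star (D m) (JJ p)) := by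
        simp only [D]; rw [K.pr_star, hcomm]
      rw [hb m _ (K.P_mem n p), ← K.P_J hJJ (fun h => by rw [hJt]; exact K.tau_mem_sub _ _), hD,
        ← ha, ← K.P_inner, ← starOpL (C m), hCs]
    have lim1 : ∀ z ∈ K.sub n, Tendsto (fun m => C m (E z)) atTop (𝓝 (E z)) := by
      intro z hz
      refine tendsto_of_span (fun m => C m * E) (fun m => ?_) E _ ?_ hz
      · refine (norm_mul_le _ _).trans (mul_le_one₀ (K.pr_norm _ _ fun i => (S i).nC m)
          (norm_nonneg _) (K.pr_norm _ _ fun i => (S i).ne))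
      · rintro _ ⟨h, rfl⟩
        have h2 : ∀ m, (C m * E) (tau tp n h) = tau tp n (fun i => (S i).C m ((S i).e (h i))) := by
          intro m
          change C m (E (tau tp n h)) = _
          simp only [C, E]; rw [K.pr_tau', K.pr_tau']
        simp only [h2]
        simp only [E]
        rw [K.pr_tau']
        exact ((K.tau_cont n).tendsto _).comp (tendsto_pi_nhds.2 fun i => (S i).limC (h i))
    have lim2 : ∀ z ∈ K.sub n, Tendsto (fun m => C' m (F z)) atTop (𝓝 (E' (F z))) := by
      intro z hz
      refine tendsto_of_span (fun m => C' m * F) (fun m => ?_) (E' * F) _ ?_ hz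
      · refine (norm_mul_le _ _).trans (mul_le_one₀ (K.pr_norm _ _ fun i => (S i).nC' m)
          (norm_nonneg _) (K.pr_norm _ _ fun i => (S i).nf))
      · rintro _ ⟨h, rfl⟩
        have h2 : ∀ m, (C' m * F) (tau tp n h) =
            tau tp n (fun i => (S i).C' m ((S i).f (h i))) := by
          intro m
          change C' m (F (tau tp n h)) = _
          simp only [C', F]; rw [K.pr_tau', K.pr_tau']
        have h3 : (E' * F) (tau tp n h) =
            tau tp n (fun i => (S i).e' ((S i).f (h i))) := by
          change E' (F (tau tp n h)) = _
          simp only [E', F]; rw [K.pr_tau', K.pr_tau']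
        simp only [h2, h3]
        exact ((K.tau_cont n).tendsto _).comp (tendsto_pi_nhds.2 fun i => (S i).limC' (h i))
    have hFP : F (K.P n p) = K.P n p := by
      have := hcomm (fun i => (S i).f) p
      change K.P n (F p) = F (K.P n p) at this
      rw [← this, hFp]
    have hEP : E (K.P n r) = K.P n r := by
      have := hcomm (fun i => (S i).e) r
      change K.P n (E r) = E (K.P n r) at this
      rw [← this, hEr]
    have l1 := lim1 _ (K.P_mem n r)
    have l2 := lim2 _ (K.P_mem n p)
    rw [hFP] at l2
    rw [hEP] at l1
    have l3 := (l1.inner (tendsto_const_nhds (x := q)) : Tendsto _ _ (𝓝 ⟪K.P n r, q⟫_ℂ))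
    have l4 := (l2.inner (tendsto_const_nhds (x := s)) : Tendsto _ _ (𝓝 ⟪E' (K.P n p), s⟫_ℂ))
    have l5 := tendsto_nhds_unique (l4.congr hab) l3
    rw [← l5, ← hE's, starOpL, hE'sv]
  refine K.eq_on_sub fun ω => ?_
  change K.P n (y (K.P n (x _))) = K.P n (x (K.P n (y _)))
  refine K.sub_ext fun ω' => ?_
  have h1 := congrArg (starRingEnd ℂ) (key ω ω')
  rw [starOpR, starOpR, inner_conj_symm, inner_conj_symm] at h1
  exact h1

end IsITP
end Ungraded

section SComm
variable {R : Type*} [Ring R] [Algebra ℂ R]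

/-- commutation up to a scalar -/
def SComm (c : ℂ) (g x : R) : Prop := g * x = c • (x * g)

lemma scomm_one {g x : R} : SComm 1 g x ↔ Commute g x := by
  unfold SComm; rw [one_smul]; rfl
lemma SComm.mul_right {c d : ℂ} {g x y : R} (h : SComm c g x) (h' : SComm d g y) :
    SComm (c * d) g (x * y) := by
  unfold SComm at *
  rw [← mul_assoc, h, smul_mul_assoc, mul_assoc, h', mul_smul_comm, smul_smul, mul_assoc]
lemma SComm.mul_left {c d : ℂ} {g h x : R} (hg : SComm c g x) (hh : SComm d h x) :
    SComm (c * d) (g * h) x := by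
  unfold SComm at *
  rw [mul_assoc, hh, mul_smul_comm, ← mul_assoc, hg, smul_mul_assoc, smul_smul, mul_assoc,
    mul_comm d c]
lemma SComm.pow_left {c : ℂ} {g x : R} (h : SComm c g x) (m : ℕ) : SComm (c ^ m) (g ^ m) x := by
  induction m with
  | zero => rw [pow_zero, pow_zero, scomm_one]; exact Commute.one_left x
  | succ m ih => rw [pow_succ, pow_succ]; exact ih.mul_left h
lemma SComm.symm {c : ℂ} (hc : c * c = 1) {g x : R} (h : SComm c g x) : SComm c x g := by
  unfold SComm at *
  rw [h, smul_smul, hc, one_smul]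
lemma neg_one_sq_pow (m : ℕ) : ((-1 : ℂ) ^ m) * (-1) ^ m = 1 := by
  rw [← mul_pow]; simp
lemma SComm.cancel {c : ℂ} (hc : c * c = 1) {g x y : R} (h : SComm c g x)
    (h' : SComm c g y) : Commute g (x * y) := by
  have := h.mul_right h'
  rwa [hc, scomm_one] at this
lemma SComm.cancel_left {c : ℂ} (hc : c * c = 1) {g h x : R} (hg : SComm c g x)
    (hh : SComm c h x) : Commute (g * h) x := by
  have := hg.mul_left hh
  rwa [hc, scomm_one] at this

lemma scomm_conj {c : ℂ} (hc : c * c = 1) {g z x : R} (h : SComm c g z) (hzx : Commute z x) :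
    Commute z (g * x * g) := by
  have h1 := h.symm hc
  have h2 := (h1.mul_right (scomm_one.2 hzx)).mul_right h1
  rwa [mul_one, hc, scomm_one] at h2

lemma conj_even {U a : R} (hU : U * U = 1) (h : U * a * U = a) : SComm 1 U a := by
  unfold SComm
  rw [one_smul]
  conv_rhs => rw [← h]
  rw [mul_assoc, hU, mul_one]
lemma conj_odd {U a : R} (hU : U * U = 1) (h : U * a * U = -a) : SComm (-1) U a := by
  unfold SComm
  have : a = -(U * a * U) := by rw [h, neg_neg]
  conv_rhs => rw [this]
  rw [neg_mul, mul_assoc, hU, mul_one]; simp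
end SComm

section Graded
open Filter Topology
variable {H : ℕ → Type*} [∀ i, NormedAddCommGroup (H i)]
    [∀ i, InnerProductSpace ℂ (H i)] [∀ i, CompleteSpace (H i)]
    {HH : Type*} [NormedAddCommGroup HH] [InnerProductSpace ℂ HH] [CompleteSpace HH]
variable {ξ : ∀ i, H i} {tp : (n : ℕ) → ((i : Fin n) → H i.val) → HH}
namespace IsITP
variable (K : IsITP ξ tp)

lemma pi_scomm {i : ℕ} {c : ℂ} {S T : H i →L[ℂ] H i} (h : SComm c S T) :
    SComm c (K.pi i S) (K.pi i T) := by
  unfold SComm at *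
  rw [← K.pi_mul, h, K.pi_smul, K.pi_mul]

lemma pi_pow (i m : ℕ) (T : H i →L[ℂ] H i) : K.pi i (T ^ m) = K.pi i T ^ m := by
  induction m with
  | zero => simp [K.pi_one]
  | succ m ih => rw [pow_succ, pow_succ, K.pi_mul, ih]

lemma pr_scomm {n : ℕ} {T : ∀ i, H i →L[ℂ] H i} {x : HH →L[ℂ] HH} {f : ℕ → ℕ}
    (h : ∀ i < n, SComm ((-1) ^ f i) (K.pi i (T i)) x) :
    SComm ((-1) ^ (∑ i ∈ Finset.range n, f i)) (K.pr T n) x := by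
  induction n with
  | zero => simp only [Finset.range_zero, Finset.sum_empty, pow_zero]; exact
      scomm_one.2 (Commute.one_left x)
  | succ n ih =>
    rw [Finset.sum_range_succ, pow_add]
    exact (ih fun i hi => h i (by omega)).mul_left (h n (by omega))

def HX (U : ∀ i, H i →L[ℂ] H i) (A : ∀ i, Set (H i →L[ℂ] H i)) (n : ℕ) (x : HH →L[ℂ] HH) : Prop :=
  (∀ i < n, ∀ a ∈ A i, U i * a * U i = a → Commute (K.pi i a) x) ∧
  (∀ i < n, ∀ a ∈ A i, U i * a * U i = -a →
    Commute (K.pi i a * (K.pr U (i + 1) * K.pr U n)) x)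

def HY (U : ∀ i, H i →L[ℂ] H i) (B : ∀ i, Set (H i →L[ℂ] H i)) (n : ℕ) (y : HH →L[ℂ] HH) : Prop :=
  (∀ i < n, ∀ b ∈ B i, U i * b * U i = b → Commute (K.pi i b) y) ∧
  (∀ i < n, ∀ b ∈ B i, U i * b * U i = -b → Commute (K.pr U i * K.pi i b) y)

variable {U : ∀ i, H i →L[ℂ] H i} {A B : ∀ i, Set (H i →L[ℂ] H i)}

lemma pi_pr_comm (n k : ℕ) : Commute (K.pi k (U k)) (K.pr U n) := by
  refine (K.pr_commute fun i _ => ?_).symm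
  by_cases h : i = k
  · subst h; exact Commute.refl _
  · exact K.pi_comm h _ _

lemma pi_site_scomm (hU : ∀ i, U i * U i = 1) (k : ℕ) {i : ℕ} {a : H i →L[ℂ] H i}
    (ha : U i * a * U i = a ∨ U i * a * U i = -a) :
    ∃ c : ℂ, c * c = 1 ∧ SComm c (K.pi k (U k)) (K.pi i a) := by
  by_cases h : k = i
  · subst h
    rcases ha with ha | ha
    · exact ⟨1, by simp, K.pi_scomm (conj_even (hU k) ha)⟩
    · exact ⟨-1, by simp, K.pi_scomm (conj_odd (hU k) ha)⟩
  · exact ⟨1, by simp, scomm_one.2 (K.pi_comm h _ _)⟩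

lemma HX.conj (hU : ∀ i, U i * U i = 1) {n : ℕ} {x : HH →L[ℂ] HH} (hx : K.HX U A n x) (k : ℕ) :
    K.HX U A n (K.pi k (U k) * x * K.pi k (U k)) := by
  refine ⟨fun i hi a ha hh => ?_, fun i hi a ha hh => ?_⟩
  · obtain ⟨c, hc, h⟩ := K.pi_site_scomm hU k (Or.inl hh)
    exact scomm_conj hc h (hx.1 i hi a ha hh)
  · obtain ⟨c, hc, h⟩ := K.pi_site_scomm hU k (Or.inr hh)
    have h2 := h.mul_right (scomm_one.2 ((K.pi_pr_comm (U := U) (i + 1) k).mul_right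
      (K.pi_pr_comm (U := U) n k)))
    rw [mul_one] at h2
    exact scomm_conj hc h2 (hx.2 i hi a ha hh)

lemma HY.conj (hU : ∀ i, U i * U i = 1) {n : ℕ} {x : HH →L[ℂ] HH} (hx : K.HY U A n x) (k : ℕ) :
    K.HY U A n (K.pi k (U k) * x * K.pi k (U k)) := by
  refine ⟨fun i hi a ha hh => ?_, fun i hi a ha hh => ?_⟩
  · obtain ⟨c, hc, h⟩ := K.pi_site_scomm hU k (Or.inl hh)
    exact scomm_conj hc h (hx.1 i hi a ha hh)
  · obtain ⟨c, hc, h⟩ := K.pi_site_scomm hU k (Or.inr hh)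
    have h2 := (scomm_one.2 (K.pi_pr_comm (U := U) i k)).mul_right h
    rw [one_mul] at h2
    exact scomm_conj hc h2 (hx.2 i hi a ha hh)

lemma HX.lin {n : ℕ} {x y : HH →L[ℂ] HH} (hx : K.HX U A n x) (hy : K.HX U A n y) (c d : ℂ) :
    K.HX U A n (c • x + d • y) :=
  ⟨fun i hi a ha hh => ((hx.1 i hi a ha hh).smul_right c).add_right
      ((hy.1 i hi a ha hh).smul_right d),
   fun i hi a ha hh => ((hx.2 i hi a ha hh).smul_right c).add_right
      ((hy.2 i hi a ha hh).smul_right d)⟩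
lemma HY.lin {n : ℕ} {x y : HH →L[ℂ] HH} (hx : K.HY U A n x) (hy : K.HY U A n y) (c d : ℂ) :
    K.HY U A n (c • x + d • y) :=
  ⟨fun i hi a ha hh => ((hx.1 i hi a ha hh).smul_right c).add_right
      ((hy.1 i hi a ha hh).smul_right d),
   fun i hi a ha hh => ((hx.2 i hi a ha hh).smul_right c).add_right
      ((hy.2 i hi a ha hh).smul_right d)⟩

lemma sign_count (e e' : ℕ → ℕ) (n : ℕ) : ∃ t,
    ∑ j ∈ Finset.range n, (e' j * (∑ l ∈ Finset.range (j + 1), e l + ∑ l ∈ Finset.range n, e l)) =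
    ∑ j ∈ Finset.range n, (e j * ∑ l ∈ Finset.range j, e' l) + 2 * t := by
  induction n with
  | zero => exact ⟨0, by simp⟩
  | succ n ih =>
    obtain ⟨t, ht⟩ := ih
    refine ⟨t + e' n * ∑ l ∈ Finset.range (n + 1), e l, ?_⟩
    rw [Finset.sum_range_succ, Finset.sum_range_succ (fun j => e j * _)]
    have h1 : ∑ j ∈ Finset.range n,
        (e' j * (∑ l ∈ Finset.range (j + 1), e l + ∑ l ∈ Finset.range (n + 1), e l)) =
        ∑ j ∈ Finset.range n,
        (e' j * (∑ l ∈ Finset.range (j + 1), e l + ∑ l ∈ Finset.range n, e l)) +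
        e n * ∑ l ∈ Finset.range n, e' l := by
      rw [Finset.mul_sum, ← Finset.sum_add_distrib]
      refine Finset.sum_congr rfl fun j _ => ?_
      rw [Finset.sum_range_succ _ n]; ring
    rw [h1, ht]; ring

lemma even_odd_split {i : ℕ} (hU : U i * U i = 1) (a : H i →L[ℂ] H i) :
    ∃ a₀ a₁ : H i →L[ℂ] H i, a = a₀ + a₁ ∧ U i * a₀ * U i = a₀ ∧ U i * a₁ * U i = -a₁ ∧
      a₀ = (2⁻¹ : ℂ) • (a + U i * a * U i) ∧ a₁ = (2⁻¹ : ℂ) • (a + (-1 : ℂ) • (U i * a * U i)) := by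
  have h : U i * (U i * a * U i) * U i = a := by
    rw [← mul_assoc, ← mul_assoc, hU, one_mul, mul_assoc, hU, mul_one]
  refine ⟨_, _, ?_, ?_, ?_, rfl, rfl⟩
  · module
  · rw [mul_smul_comm, smul_mul_assoc, mul_add, add_mul, h, add_comm]
  · rw [mul_smul_comm, smul_mul_assoc, mul_add, add_mul, mul_smul_comm, smul_mul_assoc, h]
    module

/-- graded commutation for operators which are homogeneous at all sites -/
lemma graded_homog (n : ℕ) (hAB : ∀ i, VNPair (A i) (B i)) (hU : ∀ i, U i * U i = 1)
    (hA : ∀ i, ∀ a ∈ A i, U i * a * U i ∈ A i) (hB : ∀ i, ∀ a ∈ B i, U i * a * U i ∈ B i)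
    {x y : HH →L[ℂ] HH} (hxP : x * K.P n = x) (hPx : K.P n * x = x) (hyP : y * K.P n = y)
    (hPy : K.P n * y = y) (hx : K.HX U A n x) (hy : K.HY U B n y) (e e' : ℕ → ℕ)
    (he : ∀ i < n, SComm ((-1) ^ e i) (K.pi i (U i)) x)
    (he' : ∀ i < n, SComm ((-1) ^ e' i) (K.pi i (U i)) y) : x * y = y * x := by
  let σ : ℕ → ℕ := fun i => ∑ l ∈ Finset.range (i + 1), e l + ∑ l ∈ Finset.range n, e l
  let σ' : ℕ → ℕ := fun i => ∑ l ∈ Finset.range i, e' l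
  have hodd : ∀ i < n, ∀ a ∈ A i, U i * a * U i = -a → SComm ((-1) ^ σ i) (K.pi i a) x := by
    intro i hi a ha hh
    have h1 : SComm ((-1) ^ σ i) (K.pr U (i + 1) * K.pr U n) x := by
      rw [pow_add]
      exact (K.pr_scomm fun j hj => he j (by omega)).mul_left (K.pr_scomm fun j hj => he j hj)
    have h2 := scomm_one.2 (hx.2 i hi a ha hh)
    have hsq : ∀ m, K.pr U m * K.pr U m = 1 := by
      intro m
      induction m with
      | zero => simp [pr]
      | succ m ih =>
        have hc : K.pi m (U m) * K.pr U m = K.pr U m * K.pi m (U m) := K.pi_pr_comm (U := U) m m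
        change K.pr U m * K.pi m (U m) * (K.pr U m * K.pi m (U m)) = 1
        rw [mul_assoc, ← mul_assoc (K.pi m (U m)), hc, mul_assoc, ← K.pi_mul, hU, K.pi_one,
          mul_one, ih]
    have hcc : Commute (K.pr U (i + 1)) (K.pr U n) :=
      K.pr_commute fun j _ => K.pi_pr_comm n j
    have h3 := h2.mul_left h1
    have h4 : K.pi i a * (K.pr U (i + 1) * K.pr U n) * (K.pr U (i + 1) * K.pr U n) =
        K.pi i a := by
      rw [mul_assoc, mul_assoc (K.pr U (i + 1)), ← mul_assoc (K.pr U n), ← hcc.eq,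
        mul_assoc (K.pr U (i + 1)), hsq, mul_one, hsq, mul_one]
    rwa [h4, one_mul] at h3
  have hodd' : ∀ i < n, ∀ b ∈ B i, U i * b * U i = -b → SComm ((-1) ^ σ' i) (K.pi i b) y := by
    intro i hi b hb hh
    have h1 : SComm ((-1) ^ σ' i) (K.pr U i) y :=
      K.pr_scomm fun j hj => he' j (by omega)
    have h2 := scomm_one.2 (hy.2 i hi b hb hh)
    have hsq : ∀ m, K.pr U m * K.pr U m = 1 := by
      intro m
      induction m with
      | zero => simp [pr]
      | succ m ih =>
        have hc : K.pi m (U m) * K.pr U m = K.pr U m * K.pi m (U m) := K.pi_pr_comm (U := U) m m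
        change K.pr U m * K.pi m (U m) * (K.pr U m * K.pi m (U m)) = 1
        rw [mul_assoc, ← mul_assoc (K.pi m (U m)), hc, mul_assoc, ← K.pi_mul, hU, K.pi_one,
          mul_one, ih]
    have h3 := h1.mul_left h2
    rwa [← mul_assoc, hsq, one_mul, mul_one] at h3
  let kx := K.pr (fun i => U i ^ σ i) n
  let ky := K.pr (fun i => U i ^ σ' i) n
  -- the Klein transformed operators
  have klein : ∀ (ρ : ℕ → ℕ) (z : HH →L[ℂ] HH) (D : ∀ i, Set (H i →L[ℂ] H i))
      (_ : ∀ i, ∀ a ∈ D i, U i * a * U i ∈ D i)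
      (_ : ∀ i, ∀ a ∈ D i, ∀ b ∈ D i, ∀ c d : ℂ, c • (a + d • b) ∈ D i),
      (∀ i < n, ∀ a ∈ D i, U i * a * U i = a → Commute (K.pi i a) z) →
      (∀ i < n, ∀ a ∈ D i, U i * a * U i = -a → SComm ((-1) ^ ρ i) (K.pi i a) z) →
      ∀ i < n, ∀ a ∈ D i, Commute (K.pi i a) (K.pr (fun i => U i ^ ρ i) n * z) := by
    intro ρ z D hD hDl hev hod i hi a ha
    obtain ⟨a0, a1, hsum, h0, h1, e0, e1⟩ := even_odd_split (U := U) (hU i) a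
    have ha0 : a0 ∈ D i := by
      rw [e0]; simpa using hDl i _ ha _ (hD i _ ha) 2⁻¹ 1
    have ha1 : a1 ∈ D i := by
      rw [e1]; exact hDl i _ ha _ (hD i _ ha) 2⁻¹ (-1)
    rw [hsum, K.pi_add]
    refine Commute.add_left ?_ ?_
    · refine Commute.mul_right ?_ (hev i hi _ ha0 h0)
      refine (K.pr_commute fun j _ => ?_).symm
      by_cases hij : j = i
      · subst hij
        have := (K.pi_scomm (conj_even (hU j) h0)).pow_left (ρ j)
        rw [one_pow, scomm_one] at this
        rwa [K.pi_pow]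
      · exact K.pi_comm hij _ _
    · have hs : SComm ((-1) ^ ρ i) (K.pi i a1) (K.pr (fun i => U i ^ ρ i) n) := by
        refine SComm.symm (neg_one_sq_pow _) ?_
        have := K.pr_scomm (n := n) (T := fun i => U i ^ ρ i) (x := K.pi i a1)
          (f := fun j => if j = i then ρ i else 0) (fun j hj => by
            by_cases hij : j = i
            · subst hij
              have := (K.pi_scomm (conj_odd (hU j) h1)).pow_left (ρ j)
              rw [K.pi_pow]
              simpa using this
            · simp only [hij, if_false, pow_zero]
              exact scomm_one.2 (K.pi_comm hij _ _))
        rwa [Finset.sum_ite_eq' , if_pos (Finset.mem_range.2 hi)] at this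
      exact hs.cancel (neg_one_sq_pow _) (hod i hi _ ha1 h1)
  have hlinA : ∀ i, ∀ a ∈ A i, ∀ b ∈ A i, ∀ c d : ℂ, c • (a + d • b) ∈ A i :=
    fun i a ha b hb c d => (hAB i).smul_mem c ((hAB i).add_mem ha ((hAB i).smul_mem d hb))
  have hlinB : ∀ i, ∀ a ∈ B i, ∀ b ∈ B i, ∀ c d : ℂ, c • (a + d • b) ∈ B i :=
    fun i a ha b hb c d =>
      (hAB i).symm.smul_mem c ((hAB i).symm.add_mem ha ((hAB i).symm.smul_mem d hb))
  have main := K.ungraded n hAB (klein σ x A hA hlinA hx.1 hodd) (klein σ' y B hB hlinB hy.1 hodd')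
  change K.P n * (ky * y) * K.P n * (kx * x) * K.P n = K.P n * (kx * x) * K.P n * (ky * y) * K.P n
    at main
  have hkx : K.P n * kx = kx * K.P n := (K.P_pr _ n).symm.eq
  have hky : K.P n * ky = ky * K.P n := (K.P_pr _ n).symm.eq
  have m1 : K.P n * (ky * y) * K.P n * (kx * x) * K.P n = ky * y * (kx * x) := by
    rw [← mul_assoc (K.P n) ky y, hky, mul_assoc ky, hPy, mul_assoc ky, hyP,
      mul_assoc _ _ (K.P n), mul_assoc kx, hxP]
  have m2 : K.P n * (kx * x) * K.P n * (ky * y) * K.P n = kx * x * (ky * y) := by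
    rw [← mul_assoc (K.P n) kx x, hkx, mul_assoc kx, hPx, mul_assoc kx, hxP,
      mul_assoc _ _ (K.P n), mul_assoc ky, hyP]
  rw [m1, m2] at main
  have sx : SComm ((-1) ^ (∑ i ∈ Finset.range n, e i * σ' i)) ky x :=
    K.pr_scomm fun i hi => by
      rw [K.pi_pow, pow_mul]; exact (he i hi).pow_left _
  have sy : SComm ((-1) ^ (∑ i ∈ Finset.range n, e' i * σ i)) kx y :=
    K.pr_scomm fun i hi => by
      rw [K.pi_pow, pow_mul]; exact (he' i hi).pow_left _
  have hsgn : ((-1 : ℂ) ^ (∑ i ∈ Finset.range n, e' i * σ i)) =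
      (-1) ^ (∑ i ∈ Finset.range n, e i * σ' i) := by
    obtain ⟨t, ht⟩ := sign_count e e' n
    change ((-1 : ℂ) ^ (∑ j ∈ Finset.range n, (e' j * (∑ l ∈ Finset.range (j + 1), e l +
      ∑ l ∈ Finset.range n, e l)))) = _
    rw [ht, pow_add, pow_mul (-1 : ℂ) 2]; simp [σ']
  rw [hsgn] at sy
  set c : ℂ := (-1) ^ (∑ i ∈ Finset.range n, e i * σ' i) with hcdef
  have hc : c * c = 1 := neg_one_sq_pow _
  have hkk : Commute kx ky := by
    refine K.pr_commute fun i _ => (K.pr_commute fun j _ => ?_).symm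
    rw [K.pi_pow, K.pi_pow]
    refine Commute.pow_pow ?_ _ _
    by_cases h : j = i
    · subst h; exact Commute.refl _
    · exact K.pi_comm h _ _
  have sx' := sx.symm hc
  have sy' := sy.symm hc
  unfold SComm at sx' sy'
  have m3 : kx * ky * (x * y) = kx * ky * (y * x) := by
    have e1 : ky * y * (kx * x) = c • (kx * ky * (y * x)) := by
      rw [mul_assoc, ← mul_assoc y, sy', hkk.eq]; simp [mul_assoc]
    have e2 : kx * x * (ky * y) = c • (kx * ky * (x * y)) := by
      rw [mul_assoc, ← mul_assoc x, sx']; simp [mul_assoc]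
    rw [e1, e2] at main
    have := congrArg (fun z => c • z) main
    simp only [smul_smul, hc, one_smul] at this
    exact this.symm
  -- invertibility of kx * ky
  have hinv : ∀ (ρ : ℕ → ℕ), IsUnit (K.pr (fun i => U i ^ ρ i) n) := by
    intro ρ
    generalize n = m
    induction m with
    | zero => exact isUnit_one
    | succ m ih =>
      refine ih.mul ?_
      rw [K.pi_pow]
      refine IsUnit.pow _ ?_
      have : K.pi m (U m) * K.pi m (U m) = 1 := by rw [← K.pi_mul, hU, K.pi_one]
      exact ⟨⟨_, _, this, this⟩, rfl⟩
  exact ((hinv σ).mul (hinv σ')).mul_left_cancel m3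

lemma scomm_of_conj {g x : HH →L[ℂ] HH} (hg : g * g = 1) :
    ∃ x₀ x₁ : HH →L[ℂ] HH, x = x₀ + x₁ ∧ SComm 1 g x₀ ∧ SComm (-1) g x₁ ∧
      x₀ = (2⁻¹ : ℂ) • x + (2⁻¹ : ℂ) • (g * x * g) ∧
      x₁ = (2⁻¹ : ℂ) • x + (-2⁻¹ : ℂ) • (g * x * g) := by
  have h : g * (g * x * g) = x * g := by rw [← mul_assoc, ← mul_assoc, hg, one_mul]
  have h' : g * x * g * g = g * x := by rw [mul_assoc, hg, mul_one]
  refine ⟨_, _, ?_, ?_, ?_, rfl, rfl⟩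
  · module
  · unfold SComm
    rw [mul_add, add_mul, mul_smul_comm, mul_smul_comm, smul_mul_assoc, smul_mul_assoc, h, h']
    module
  · unfold SComm
    rw [mul_add, add_mul, mul_smul_comm, mul_smul_comm, smul_mul_assoc, smul_mul_assoc, h, h']
    module

lemma scomm_conj_pres {c : ℂ} {g h x : HH →L[ℂ] HH} (hgh : Commute g h) (hx : SComm c g x)
    (a b : ℂ) : SComm c g (a • x + b • (h * x * h)) := by
  have h1 := ((scomm_one.2 hgh).mul_right hx).mul_right (scomm_one.2 hgh)
  rw [one_mul, mul_one] at h1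
  unfold SComm at *
  rw [mul_add, add_mul, mul_smul_comm, mul_smul_comm, smul_mul_assoc, smul_mul_assoc, h1, hx]
  module

/-- finite graded commutation theorem -/
lemma graded (n : ℕ) (hAB : ∀ i, VNPair (A i) (B i)) (hU : ∀ i, U i * U i = 1)
    (hA : ∀ i, ∀ a ∈ A i, U i * a * U i ∈ A i) (hB : ∀ i, ∀ a ∈ B i, U i * a * U i ∈ B i)
    {x y : HH →L[ℂ] HH} (hxP : x * K.P n = x) (hPx : K.P n * x = x) (hyP : y * K.P n = y)
    (hPy : K.P n * y = y) (hx : K.HX U A n x) (hy : K.HY U B n y) : x * y = y * x := by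
  have hG : ∀ k, K.pi k (U k) * K.pi k (U k) = 1 := fun k => by rw [← K.pi_mul, hU, K.pi_one]
  have hGG : ∀ i j, Commute (K.pi i (U i)) (K.pi j (U j)) := by
    intro i j
    by_cases h : i = j
    · subst h; exact Commute.refl _
    · exact K.pi_comm h _ _
  have claim : ∀ d k, k + d = n → ∀ x y : HH →L[ℂ] HH, x * K.P n = x → K.P n * x = x →
      y * K.P n = y → K.P n * y = y → K.HX U A n x → K.HY U B n y →
      (∃ e : ℕ → ℕ, ∀ i < k, SComm ((-1) ^ e i) (K.pi i (U i)) x) →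
      (∃ e : ℕ → ℕ, ∀ i < k, SComm ((-1) ^ e i) (K.pi i (U i)) y) → x * y = y * x := by
    intro d
    induction d with
    | zero =>
      intro k hk x y h1 h2 h3 h4 h5 h6 ⟨e, he⟩ ⟨e', he'⟩
      obtain rfl : k = n := by omega
      exact K.graded_homog k hAB hU hA hB h1 h2 h3 h4 h5 h6 e e' he he'
    | succ d ih =>
      intro k hk x y h1 h2 h3 h4 h5 h6 ⟨e, he⟩ ⟨e', he'⟩
      have hgP : Commute (K.pi k (U k)) (K.P n) := K.P_pi (by omega) _
      have hPc : ∀ z : HH →L[ℂ] HH, z * K.P n = z → ∀ a b : ℂ,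
          (a • z + b • (K.pi k (U k) * z * K.pi k (U k))) * K.P n =
          a • z + b • (K.pi k (U k) * z * K.pi k (U k)) := by
        intro z hz a b
        rw [add_mul, smul_mul_assoc, smul_mul_assoc, hz, mul_assoc _ _ (K.P n), hgP.eq,
          ← mul_assoc, mul_assoc _ z, hz]
      have hPc' : ∀ z : HH →L[ℂ] HH, K.P n * z = z → ∀ a b : ℂ,
          K.P n * (a • z + b • (K.pi k (U k) * z * K.pi k (U k))) =
          a • z + b • (K.pi k (U k) * z * K.pi k (U k)) := by
        intro z hz a b
        rw [mul_add, mul_smul_comm, mul_smul_comm, hz, ← mul_assoc, ← mul_assoc, ← hgP.eq,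
          mul_assoc _ _ z, hz]
      have hext : ∀ (z : HH →L[ℂ] HH) (f : ℕ → ℕ) (m : ℕ) (a b : ℂ),
          (∀ i < k, SComm ((-1) ^ f i) (K.pi i (U i)) z) →
          SComm ((-1) ^ m) (K.pi k (U k)) (a • z + b • (K.pi k (U k) * z * K.pi k (U k))) →
          ∃ f' : ℕ → ℕ, ∀ i < k + 1, SComm ((-1) ^ f' i) (K.pi i (U i))
            (a • z + b • (K.pi k (U k) * z * K.pi k (U k))) := by
        intro z f m a b hf hm
        refine ⟨Function.update f k m, fun i hi => ?_⟩
        by_cases hik : i = k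
        · subst hik; rw [Function.update_self]; exact hm
        · rw [Function.update_of_ne hik]
          exact scomm_conj_pres (hGG i k) (hf i (by omega)) a b
      obtain ⟨x0, x1, hxs, sx0, sx1, ex0, ex1⟩ := scomm_of_conj (x := x) (hG k)
      obtain ⟨y0, y1, hys, sy0, sy1, ey0, ey1⟩ := scomm_of_conj (x := y) (hG k)
      have key : ∀ (a b a' b' : ℂ) (m m' : ℕ),
          SComm ((-1) ^ m) (K.pi k (U k)) (a • x + b • (K.pi k (U k) * x * K.pi k (U k))) →
          SComm ((-1) ^ m') (K.pi k (U k)) (a' • y + b' • (K.pi k (U k) * y * K.pi k (U k))) →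
          (a • x + b • (K.pi k (U k) * x * K.pi k (U k))) *
          (a' • y + b' • (K.pi k (U k) * y * K.pi k (U k))) =
          (a' • y + b' • (K.pi k (U k) * y * K.pi k (U k))) *
          (a • x + b • (K.pi k (U k) * x * K.pi k (U k))) := by
        intro a b a' b' m m' hm hm'
        exact ih (k + 1) (by omega) _ _ (hPc x h1 a b) (hPc' x h2 a b) (hPc y h3 a' b')
          (hPc' y h4 a' b') (HX.lin K h5 (HX.conj K hU h5 k) a b)
          (HY.lin K h6 (HY.conj K hU h6 k) a' b')
          (hext x e m a b he hm) (hext y e' m' a' b' he' hm')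
      have k00 := key 2⁻¹ 2⁻¹ 2⁻¹ 2⁻¹ 0 0 (by rw [← ex0]; simpa using sx0)
        (by rw [← ey0]; simpa using sy0)
      have k01 := key 2⁻¹ 2⁻¹ 2⁻¹ (-2⁻¹) 0 1 (by rw [← ex0]; simpa using sx0)
        (by rw [← ey1]; simpa using sy1)
      have k10 := key 2⁻¹ (-2⁻¹) 2⁻¹ 2⁻¹ 1 0 (by rw [← ex1]; simpa using sx1)
        (by rw [← ey0]; simpa using sy0)
      have k11 := key 2⁻¹ (-2⁻¹) 2⁻¹ (-2⁻¹) 1 1 (by rw [← ex1]; simpa using sx1)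
        (by rw [← ey1]; simpa using sy1)
      rw [← ex0, ← ey0] at k00
      rw [← ex0, ← ey1] at k01
      rw [← ex1, ← ey0] at k10
      rw [← ex1, ← ey1] at k11
      rw [hxs, hys, add_mul, mul_add, mul_add, mul_add, add_mul, add_mul, k00, k01, k10, k11]
  exact claim n 0 (by omega) x y hxP hPx hyP hPy hx hy ⟨fun _ => 0, fun i hi => by omega⟩
    ⟨fun _ => 0, fun i hi => by omega⟩

/-- The infinite graded commutation theorem. -/
lemma graded_infinite (hAB : ∀ i, VNPair (A i) (B i)) (hU : ∀ i, U i * U i = 1)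
    (hA : ∀ i, ∀ a ∈ A i, U i * a * U i ∈ A i) (hB : ∀ i, ∀ a ∈ B i, U i * a * U i ∈ B i)
    {W : HH →L[ℂ] HH} (hW : ∀ n x, W (tau tp n x) = tau tp n (fun i => U i (x i)))
    (hWs : star W = W)
    {x y : HH →L[ℂ] HH}
    (hx0 : ∀ i, ∀ a ∈ A i, U i * a * U i = a → Commute (K.pi i a) x)
    (hx1 : ∀ i, ∀ a ∈ A i, U i * a * U i = -a →
      Commute (K.pi i a * (K.pr U (i + 1) * W)) x)
    (hy0 : ∀ i, ∀ b ∈ B i, U i * b * U i = b → Commute (K.pi i b) y)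
    (hy1 : ∀ i, ∀ b ∈ B i, U i * b * U i = -b → Commute (K.pr U i * K.pi i b) y) :
    x * y = y * x := by
  have fin : ∀ n, (K.P n * x * K.P n) * (K.P n * y * K.P n) =
      (K.P n * y * K.P n) * (K.P n * x * K.P n) := by
    intro n
    have id := K.P_idem n
    have i1 : ∀ z : HH →L[ℂ] HH, (K.P n * z * K.P n) * K.P n = K.P n * z * K.P n := by
      intro z; rw [mul_assoc, id]
    have i2 : ∀ z : HH →L[ℂ] HH, K.P n * (K.P n * z * K.P n) = K.P n * z * K.P n := by
      intro z; rw [← mul_assoc, ← mul_assoc, id]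
    have cmp : ∀ z w : HH →L[ℂ] HH, Commute w (K.P n) → Commute w z →
        Commute w (K.P n * z * K.P n) := fun z w h1 h2 => (h1.mul_right h2).mul_right h1
    have WP : W * K.P n = K.pr U n * K.P n := K.eq_on_sub fun x => by rw [hW, K.pr_tau']
    have WP' : Commute W (K.P n) := by
      refine starProjection_commute _ _ (K.sub_inv ?_) (K.sub_inv ?_)
      · intro x; rw [hW]; exact K.tau_mem_sub _ _
      · intro x; rw [hWs, hW]; exact K.tau_mem_sub _ _
    have prP : ∀ m ≤ n, Commute (K.pr U m) (K.P n) := fun m hm =>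
      K.pr_commute fun i hi => K.P_pi (by omega) _
    refine K.graded n hAB hU hA hB (i1 x) (i2 x) (i1 y) (i2 y) ⟨?_, ?_⟩ ⟨?_, ?_⟩
    · intro i hi a ha hh
      exact cmp _ _ (K.P_pi hi _) (hx0 i a ha hh)
    · intro i hi a ha hh
      have h1 : Commute (K.pi i a * (K.pr U (i + 1) * W)) (K.P n) :=
        (K.P_pi hi _).mul_left ((prP _ (by omega)).mul_left WP')
      have h2 := cmp x _ h1 (hx1 i a ha hh)
      have h3 : K.pi i a * (K.pr U (i + 1) * K.pr U n) * K.P n =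
          K.pi i a * (K.pr U (i + 1) * W) * K.P n := by
        simp only [mul_assoc]; rw [WP]
      have h4 : Commute (K.pi i a * (K.pr U (i + 1) * K.pr U n)) (K.P n) :=
        (K.P_pi hi _).mul_left ((prP _ (by omega)).mul_left (prP _ le_rfl))
      have h5 : K.pi i a * (K.pr U (i + 1) * K.pr U n) * (K.P n * x * K.P n) =
          K.pi i a * (K.pr U (i + 1) * W) * (K.P n * x * K.P n) := by
        rw [mul_assoc (K.P n), ← mul_assoc, h3, mul_assoc]
      have h6 : (K.P n * x * K.P n) * (K.pi i a * (K.pr U (i + 1) * K.pr U n)) =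
          (K.P n * x * K.P n) * (K.pi i a * (K.pr U (i + 1) * W)) := by
        rw [mul_assoc (K.P n * x), mul_assoc (K.P n * x), ← h4.eq, ← h1.eq, h3]
      change _ = _
      rw [h5, h6]
      exact h2
    · intro i hi b hb hh
      exact cmp _ _ (K.P_pi hi _) (hy0 i b hb hh)
    · intro i hi b hb hh
      exact cmp _ _ ((prP i hi.le).mul_left (K.P_pi hi _)) (hy1 i b hb hh)
  have fin2 : ∀ u v n, ⟪star x (K.P n u), K.P n (y (K.P n v))⟫_ℂ =
      ⟪star y (K.P n u), K.P n (x (K.P n v))⟫_ℂ := by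
    intro u v n
    have h1 : K.P n (x (K.P n (K.P n (y (K.P n v))))) = K.P n (y (K.P n (K.P n (x (K.P n v))))) :=
      DFunLike.congr_fun (fin n) v
    rw [K.P_fix (K.P_mem n _), K.P_fix (K.P_mem n _)] at h1
    rw [starOpL, starOpL, K.P_inner, K.P_inner, h1]
  have lim : ∀ (z : HH →L[ℂ] HH) v, Tendsto (fun n => K.P n (z (K.P n v))) atTop (𝓝 (z v)) := by
    intro z v
    have h1 : Tendsto (fun n => z (K.P n v)) atTop (𝓝 (z v)) :=
      (z.continuous.tendsto v).comp (K.P_lim v)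
    have h2 : Tendsto (fun n => K.P n (z v) + K.P n (z (K.P n v) - z v)) atTop (𝓝 (z v + 0)) := by
      refine (K.P_lim (z v)).add ?_
      refine squeeze_zero_norm (fun n => Submodule.norm_starProjection_apply_le _ _) ?_
      have := h1.sub (tendsto_const_nhds (x := z v))
      rw [sub_self] at this
      simpa using this.norm
    rw [add_zero] at h2
    refine h2.congr fun n => ?_
    rw [← map_add]; congr 1; abel
  ext v
  change x (y v) = y (x v)
  refine ext_inner_left ℂ fun u => ?_
  have l1 : Tendsto (fun n => ⟪star x (K.P n u), K.P n (y (K.P n v))⟫_ℂ) atTop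
      (𝓝 ⟪star x u, y v⟫_ℂ) :=
    (((star x).continuous.tendsto u).comp (K.P_lim u)).inner (lim y v)
  have l2 : Tendsto (fun n => ⟪star y (K.P n u), K.P n (x (K.P n v))⟫_ℂ) atTop
      (𝓝 ⟪star y u, x v⟫_ℂ) :=
    (((star y).continuous.tendsto u).comp (K.P_lim u)).inner (lim x v)
  have := tendsto_nhds_unique (l1.congr (fin2 u v)) l2
  rwa [starOpL, starOpL] at this

end IsITP
end Graded

section Fermi
variable {H : ℕ → Type*} [∀ i, NormedAddCommGroup (H i)]
    [∀ i, InnerProductSpace ℂ (H i)] [∀ i, CompleteSpace (H i)]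
    {HH : Type*} [NormedAddCommGroup HH] [InnerProductSpace ℂ HH] [CompleteSpace HH]
variable {ξ : ∀ i, H i} {tp : (n : ℕ) → ((i : Fin n) → H i.val) → HH}
variable {U : ∀ i, H i →L[ℂ] H i}

/-- number associated with a parity -/
def bn (b : Bool) : ℕ := cond b 1 0

lemma cond_pow {E : Type*} [AddCommGroup E] [Module ℂ E] (b : Bool) (v : E) :
    cond b (-v) v = ((-1 : ℂ) ^ bn b) • v := by
  cases b <;> simp [bn]

/-- the Koszul sign exponent -/
def koszul (s sx : ℕ → Bool) (k : ℕ) : ℕ :=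
  ∑ i ∈ Finset.range k, bn (s i) * ∑ j ∈ Finset.range i, bn (sx j)

lemma card_sign {k n : ℕ} (hk : k ≤ n) (sT : Fin k → Bool) (sx : Fin n → Bool)
    (s sy : ℕ → Bool) (hs : ∀ i : Fin k, s i = sT i) (hsy : ∀ i : Fin n, sy i = sx i) :
    (Finset.univ.filter (fun p : Fin n × Fin n =>
            p.2 < p.1 ∧ (if h : (p.1 : ℕ) < k then sT ⟨p.1, h⟩ else false) = true ∧
            sx p.2 = true)).card = koszul s sy k := by
  rw [Finset.card_filter, Fintype.sum_prod_type]
  have h1 : ∀ i j : Fin n, (if (j < i ∧ (if h : (i : ℕ) < k then sT ⟨i, h⟩ else false) = true ∧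
            sx j = true) then 1 else 0) =
      (fun a b : ℕ => if b < a then (if a < k then bn (s a) * bn (sy b) else 0) else 0) i j := by
    intro i j
    simp only [Fin.val_fin_lt, ← hsy j]
    by_cases hji : j < i
    · by_cases hik : (i : ℕ) < k
      · have := hs ⟨i, hik⟩
        simp only at this
        simp only [hji, hik, ← this, dif_pos, if_true, true_and]
        cases s i <;> cases sy j <;> simp [bn]
      · simp [hji, hik]
    · simp [hji]
  simp only [h1]
  rw [Fin.sum_univ_eq_sum_range (fun a => ∑ j : Fin n,
    (if (j : ℕ) < a then (if a < k then bn (s a) * bn (sy j) else 0) else 0)) n]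
  unfold koszul
  rw [← Finset.sum_subset (Finset.range_mono hk)]
  · refine Finset.sum_congr rfl fun i hi => ?_
    have hi' := Finset.mem_range.1 hi
    rw [Fin.sum_univ_eq_sum_range (fun j =>
      (if j < i then (if i < k then bn (s i) * bn (sy j) else 0) else 0)) n, Finset.mul_sum]
    rw [← Finset.sum_subset (Finset.range_mono (show i ≤ n by omega))]
    · refine Finset.sum_congr rfl fun j hj => ?_
      rw [if_pos (Finset.mem_range.1 hj), if_pos hi']
    · intro j _ hj
      rw [if_neg (by simpa using hj)]
  · intro i _ hi
    simp at hi
    simp [not_lt.2 hi]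

namespace IsITP
variable (K : IsITP ξ tp)

/-- site generators of the Fermi product -/
def beta (U : ∀ i, H i →L[ℂ] H i) (s : Bool) (i : ℕ) (T : H i →L[ℂ] H i) : HH →L[ℂ] HH :=
  (if s then K.pr U i else 1) * K.pi i T

/-- ordered products of site generators -/
def Q (U : ∀ i, H i →L[ℂ] H i) (s : ℕ → Bool) (T : ∀ i, H i →L[ℂ] H i) : ℕ → (HH →L[ℂ] HH)
  | 0 => 1
  | k + 1 => Q U s T k * K.beta U (s k) k (T k)

lemma pr_homog (K : IsITP ξ tp) {m i : ℕ} (hi : i ≤ m) (x : ∀ i, H i) (sx : ℕ → Bool)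
    (hx : ∀ j < i, U j (x j) = cond (sx j) (-(x j)) (x j)) :
    K.pr U i (tau tp m x) = ((-1 : ℂ) ^ (∑ j ∈ Finset.range i, bn (sx j))) • tau tp m x := by
  induction i with
  | zero => simp [pr]
  | succ i ih =>
    change K.pr U i (K.pi i (U i) (tau tp m x)) = _
    rw [K.pi_tau (by omega), hx i (by omega), cond_pow, K.tau_smul m x (by omega),
      Function.update_eq_self, map_smul, ih (by omega) fun j hj => hx j (by omega), smul_smul,
      Finset.sum_range_succ, pow_add, mul_comm]

lemma beta_homog (K : IsITP ξ tp) {m i : ℕ} (hi : i < m) (s : Bool) (T : H i →L[ℂ] H i) (x : ∀ i, H i)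
    (sx : ℕ → Bool) (hx : ∀ j < i, U j (x j) = cond (sx j) (-(x j)) (x j)) :
    K.beta U s i T (tau tp m x) = ((-1 : ℂ) ^ (bn s * ∑ j ∈ Finset.range i, bn (sx j))) •
      tau tp m (Function.update x i (T (x i))) := by
  change (if s then K.pr U i else 1) (K.pi i T (tau tp m x)) = _
  rw [K.pi_tau hi]
  cases s with
  | false => simp [bn]
  | true =>
    rw [if_pos rfl, K.pr_homog hi.le _ sx]
    · simp [bn]
    · intro j hj
      rw [Function.update_of_ne (by omega)]; exact hx j hj

lemma Q_homog (K : IsITP ξ tp) (s : ℕ → Bool) (T : ∀ i, H i →L[ℂ] H i) {m k : ℕ} (hk : k ≤ m) (x : ∀ i, H i)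
    (sx : ℕ → Bool) (hx : ∀ j < k, U j (x j) = cond (sx j) (-(x j)) (x j)) :
    K.Q U s T k (tau tp m x) = ((-1 : ℂ) ^ koszul s sx k) •
      tau tp m (fun i => if i < k then T i (x i) else x i) := by
  induction k generalizing x with
  | zero => simp [Q, koszul]
  | succ k ih =>
    change K.Q U s T k (K.beta U (s k) k (T k) (tau tp m x)) = _
    rw [K.beta_homog (by omega) _ _ x sx fun j hj => hx j (by omega), map_smul, ih (by omega),
      smul_smul]
    · unfold koszul
      rw [Finset.sum_range_succ, pow_add, mul_comm]
      congr 1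
      refine tau_congr m fun i _ => ?_
      rcases lt_trichotomy i k with h | h | h
      · rw [if_pos h, if_pos (by omega), Function.update_of_ne (by omega)]
      · subst h
        rw [if_neg (by omega), if_pos (by omega), Function.update_self]
      · rw [if_neg (by omega), if_neg (by omega), Function.update_of_ne (by omega)]
    · intro j hj
      rw [Function.update_of_ne (by omega)]; exact hx j (by omega)

lemma homog_ext (K : IsITP ξ tp) (hU : ∀ i, U i * U i = 1) (m0 : ℕ) {S T : HH →L[ℂ] HH}
    (h : ∀ m x (sx : ℕ → Bool), m0 ≤ m → (∀ i < m, U i (x i) = cond (sx i) (-(x i)) (x i)) →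
      S (tau tp m x) = T (tau tp m x)) : S = T := by
  refine K.op_ext m0 fun m x hm => ?_
  have claim : ∀ l, l ≤ m → ∀ x : ∀ i, H i,
      (∀ i, l ≤ i → i < m → ∃ b : Bool, U i (x i) = cond b (-(x i)) (x i)) →
      S (tau tp m x) = T (tau tp m x) := by
    intro l
    induction l with
    | zero =>
      intro _ x hx
      have : ∀ i, ∃ b : Bool, i < m → U i (x i) = cond b (-(x i)) (x i) := by
        intro i
        by_cases hi : i < m
        · obtain ⟨b, hb⟩ := hx i (by omega) hi
          exact ⟨b, fun _ => hb⟩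
        · exact ⟨false, fun h => absurd h hi⟩
      choose sx hsx using this
      exact h m x sx hm hsx
    | succ l ih =>
      intro hl x hx
      have hUU : U l (U l (x l)) = x l := DFunLike.congr_fun (hU l) (x l)
      have e : x = Function.update x l
          ((2⁻¹ : ℂ) • (x l + U l (x l)) + (2⁻¹ : ℂ) • (x l - U l (x l))) := by
        rw [← smul_add, add_add_sub_cancel, ← two_smul ℂ, smul_smul]
        norm_num
      have ev : ∀ u : H l, (∃ b : Bool, U l u = cond b (-u) u) →
          S (tau tp m (Function.update x l u)) = T (tau tp m (Function.update x l u)) := by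
        intro u hu
        refine ih (by omega) _ fun i hi him => ?_
        by_cases hil : i = l
        · subst hil; simpa using hu
        · rw [Function.update_of_ne hil]; exact hx i (by omega) him
      rw [e, K.tau_add m x (by omega), map_add, map_add, ev _ ⟨false, ?_⟩, ev _ ⟨true, ?_⟩]
      · simp only [map_smul, map_sub, hUU, cond_true]
        rw [← smul_neg, neg_sub]
      · simp only [map_smul, map_add, hUU, cond_false]
        rw [add_comm]
  exact claim m le_rfl x fun i h1 h2 => by omega

lemma Q_mem (K : IsITP ξ tp) {N : ∀ i, Set (H i →L[ℂ] H i)} (s : ℕ → Bool) (T : ∀ i, H i →L[ℂ] H i) (k : ℕ)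
    (hT : ∀ i < k, T i ∈ N i) (hs : ∀ i < k, U i * T i * U i = cond (s i) (-(T i)) (T i)) :
    K.Q U s T k ∈ infFermiGen U tp N := by
  refine ⟨k, fun i => T i, fun i => s i, fun i => hT i i.2, fun i => hs i i.2, ?_⟩
  intro n hkn x sx hx
  rw [card_sign hkn (fun i : Fin k => s i) sx s (fun j => if h : j < n then sx ⟨j, h⟩ else false)
    (fun _ => rfl) (fun i => by simp), tp_eq_tau (tp := tp) (ξ := ξ) n x]
  rw [K.Q_homog s T hkn _ (fun j => if h : j < n then sx ⟨j, h⟩ else false)]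
  · congr 1
    unfold tau
    congr 1
    ext i
    by_cases h : (i : ℕ) < k <;> simp [extd, h]
  · intro j hj
    have hjn : j < n := by omega
    have := hx ⟨j, hjn⟩
    simp only [extd, hjn, dif_pos]
    exact this

lemma beta_mem (K : IsITP ξ tp) {N : ∀ i, Set (H i →L[ℂ] H i)} (hU : ∀ i, U i * U i = 1) (h1 : ∀ i, 1 ∈ N i)
    (s : Bool) (i : ℕ) {T : H i →L[ℂ] H i} (hT : T ∈ N i)
    (hs : U i * T * U i = cond s (-T) T) : K.beta U s i T ∈ infFermiGen U tp N := by
  have h0 : ∀ k ≤ i, K.Q U (fun j => if j = i then s else false)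
      (Function.update (fun _ => 1) i T) k = 1 := by
    intro k
    induction k with
    | zero => intro _; rfl
    | succ k ih =>
      intro hk
      change K.Q U _ _ k * K.beta U (if k = i then s else false) k _ = 1
      rw [ih (by omega), if_neg (by omega), Function.update_of_ne (by omega)]
      simp [beta, K.pi_one]
  have h2 : K.Q U (fun j => if j = i then s else false)
      (Function.update (fun _ => 1) i T) (i + 1) = K.beta U s i T := by
    change K.Q U _ _ i * K.beta U (if i = i then s else false) i _ = _
    rw [h0 i le_rfl, if_pos rfl, Function.update_self, one_mul]
  rw [← h2]
  refine K.Q_mem _ _ _ ?_ ?_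
  · intro j _
    by_cases h : j = i
    · subst h; simpa using hT
    · rw [Function.update_of_ne h]; exact h1 j
  · intro j _
    by_cases h : j = i
    · subst h; simpa using hs
    · rw [Function.update_of_ne h, if_neg h]; simp [hU]

lemma gen_eq_Q (K : IsITP ξ tp) {N : ∀ i, Set (H i →L[ℂ] H i)} (hU : ∀ i, U i * U i = 1) {P : HH →L[ℂ] HH}
    (hP : P ∈ infFermiGen U tp N) : ∃ (s : ℕ → Bool) (T : ∀ i, H i →L[ℂ] H i) (k : ℕ),
      (∀ i < k, T i ∈ N i) ∧ (∀ i < k, U i * T i * U i = cond (s i) (-(T i)) (T i)) ∧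
      P = K.Q U s T k := by
  obtain ⟨k, T, sT, hT, hs, hh⟩ := hP
  refine ⟨fun i => if h : i < k then sT ⟨i, h⟩ else false,
    fun i => if h : i < k then T ⟨i, h⟩ else 1, k, ?_, ?_, ?_⟩
  · intro i hi; simp only [dif_pos hi]; exact hT ⟨i, hi⟩
  · intro i hi; simp only [dif_pos hi]; exact hs ⟨i, hi⟩
  · refine K.homog_ext hU k fun m x sx hkm hx => ?_
    have := hh m hkm (fun i => x i) (fun i => sx i) (fun i => hx i i.2)
    rw [card_sign hkm sT _ (fun i => if h : i < k then sT ⟨i, h⟩ else false) sx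
      (fun i => by simp) (fun i => rfl)] at this
    rw [K.Q_homog _ _ hkm x sx fun j hj => hx j (by omega)]
    refine this.trans ?_
    congr 1
    unfold tau
    congr 1
    ext i
    by_cases h : (i : ℕ) < k <;> simp [h]

/-- commuting with the Fermi product is commuting with site generators -/
lemma mem_centralizer_iff (K : IsITP ξ tp) {N : ∀ i, Set (H i →L[ℂ] H i)} (hU : ∀ i, U i * U i = 1)
    (h1 : ∀ i, 1 ∈ N i) {z : HH →L[ℂ] HH} :
    z ∈ Set.centralizer (infFermiGen U tp N) ↔
      ∀ (s : Bool) i, ∀ T ∈ N i, U i * T * U i = cond s (-T) T → Commute (K.beta U s i T) z := by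
  constructor
  · intro hz s i T hT hs
    exact hz _ (K.beta_mem hU h1 s i hT hs)
  · intro hz P hP
    obtain ⟨s, T, k, hT, hs, rfl⟩ := K.gen_eq_Q hU hP
    change Commute _ _
    clear hP
    induction k with
    | zero => exact Commute.one_left z
    | succ k ih =>
      exact (ih
        (fun i hi => hT i (by omega)) fun i hi => hs i (by omega)).mul_left
        (hz _ _ _ (hT k (by omega)) (hs k (by omega)))

end IsITP
end Fermi

section Twist
variable {H : Type*} [NormedAddCommGroup H] [InnerProductSpace ℂ H] [CompleteSpace H]
variable {U : H →L[ℂ] H}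

/-- the unitary implementing the twist -/
def twK (U : H →L[ℂ] H) : H →L[ℂ] H :=
  ((1 - Complex.I) / 2) • (1 : H →L[ℂ] H) + ((1 + Complex.I) / 2) • U
/-- its inverse -/
def twK' (U : H →L[ℂ] H) : H →L[ℂ] H :=
  ((1 + Complex.I) / 2) • (1 : H →L[ℂ] H) + ((1 - Complex.I) / 2) • U

lemma twK_mul (hU : U * U = 1) : twK U * twK' U = 1 := by
  unfold twK twK'
  simp only [add_mul, mul_add, smul_mul_assoc, mul_smul_comm, one_mul, mul_one, hU, smul_smul]
  match_scalars <;> ring_nf <;> simp <;> norm_num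
lemma twK'_mul (hU : U * U = 1) : twK' U * twK U = 1 := by
  unfold twK twK'
  simp only [add_mul, mul_add, smul_mul_assoc, mul_smul_comm, one_mul, mul_one, hU, smul_smul]
  match_scalars <;> ring_nf <;> simp <;> norm_num
lemma twK_star (hUs : star U = U) : star (twK U) = twK' U := by
  unfold twK twK'
  simp [star_add, star_smul, hUs, sub_eq_add_neg]
lemma twK'_star (hUs : star U = U) : star (twK' U) = twK U := by
  rw [← twK_star hUs, star_star]
lemma twist_eq (hU : U * U = 1) (T : H →L[ℂ] H) : twist U T = twK U * T * twK' U := by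
  have h : U * (U * (T * U)) = T * U := by rw [← mul_assoc, hU, one_mul]
  unfold twist twK twK'
  simp only [add_mul, mul_add, smul_mul_assoc, mul_smul_comm, one_mul, mul_one,
    smul_add, mul_sub, smul_sub, mul_assoc, h]
  match_scalars <;> ring_nf <;> simp <;> norm_num
lemma twist_even {T : H →L[ℂ] H} (h : U * T * U = T) : twist U T = T := by
  unfold twist
  rw [h, sub_self, mul_zero, smul_zero, add_zero]
  match_scalars; norm_num
lemma twist_odd {T : H →L[ℂ] H} (h : U * T * U = -T) : twist U T = Complex.I • (U * T) := by
  unfold twist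
  rw [h, add_neg_cancel, smul_zero, zero_add, sub_neg_eq_add, mul_add]
  match_scalars; ring
lemma twist_mul (hU : U * U = 1) (S T : H →L[ℂ] H) :
    twist U (S * T) = twist U S * twist U T := by
  rw [twist_eq hU, twist_eq hU, twist_eq hU]
  calc twK U * (S * T) * twK' U = twK U * S * 1 * (T * twK' U) := by simp only [mul_assoc, one_mul]
    _ = _ := by rw [← twK'_mul hU]; simp only [mul_assoc]
/-- inverse of the twist -/
def untwist (U T : H →L[ℂ] H) : H →L[ℂ] H := twK' U * T * twK U
lemma untwist_twist (hU : U * U = 1) (T : H →L[ℂ] H) : untwist U (twist U T) = T := by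
  rw [twist_eq hU, untwist]
  calc _ = (twK' U * twK U) * T * (twK' U * twK U) := by simp only [mul_assoc]
    _ = T := by rw [twK'_mul hU]; simp
lemma twist_untwist (hU : U * U = 1) (T : H →L[ℂ] H) : twist U (untwist U T) = T := by
  rw [twist_eq hU, untwist]
  calc _ = (twK U * twK' U) * T * (twK U * twK' U) := by simp only [mul_assoc]
    _ = T := by rw [twK_mul hU]; simp
lemma twist_inj (hU : U * U = 1) {S T : H →L[ℂ] H} (h : twist U S = twist U T) : S = T := by
  rw [← untwist_twist hU S, h, untwist_twist hU]
lemma twist_commute (hU : U * U = 1) {S T : H →L[ℂ] H} :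
    Commute (twist U S) (twist U T) ↔ Commute S T := by
  constructor
  · intro h
    have h' : twist U S * twist U T = twist U T * twist U S := h
    rw [← twist_mul hU, ← twist_mul hU] at h'
    exact twist_inj hU h'
  · intro h
    change _ * _ = _ * _
    rw [← twist_mul hU, h.eq, twist_mul hU]
lemma twist_star (hU : U * U = 1) (hUs : star U = U) (T : H →L[ℂ] H) :
    star (twist U T) = twist U (star T) := by
  rw [twist_eq hU, twist_eq hU, star_mul, star_mul, twK_star hUs, twK'_star hUs, mul_assoc]
lemma twist_grad (hU : U * U = 1) (T : H →L[ℂ] H) :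
    U * twist U T * U = twist U (U * T * U) := by
  have h1 : U * twK U = twK U * U := by unfold twK; simp [mul_add, add_mul]
  have h2 : twK' U * U = U * twK' U := by unfold twK'; simp [mul_add, add_mul]
  rw [twist_eq hU, twist_eq hU]
  calc _ = (U * twK U) * T * (twK' U * U) := by simp only [mul_assoc]
    _ = _ := by rw [h1, h2]; simp only [mul_assoc]
lemma twist_neg (T : H →L[ℂ] H) : twist U (-T) = - twist U T := by
  unfold twist
  simp only [mul_neg, neg_mul, mul_sub, mul_add]
  module
lemma twistedComm_eq (hU : U * U = 1) (M : Set (H →L[ℂ] H)) :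
    twistedComm U M = Set.centralizer (twist U '' M) := by
  ext X
  constructor
  · rintro ⟨x, hx, rfl⟩ _ ⟨m, hm, rfl⟩
    exact (twist_commute hU).2 (hx m hm)
  · intro hX
    refine ⟨untwist U X, fun m hm => ?_, twist_untwist hU X⟩
    refine (twist_commute hU).1 ?_
    rw [twist_untwist hU]
    exact hX _ ⟨m, hm, rfl⟩

lemma twist_pair (hU : U * U = 1) (hUs : star U = U) {N : Set (H →L[ℂ] H)}
    (hN : Set.centralizer (Set.centralizer N) = N) (hNs : ∀ T ∈ N, star T ∈ N) :
    VNPair (twist U '' N) (twistedComm U N) := by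
  have sA : ∀ a ∈ twist U '' N, star a ∈ twist U '' N := by
    rintro _ ⟨T, hT, rfl⟩
    exact ⟨star T, hNs T hT, (twist_star hU hUs T).symm⟩
  refine ⟨?_, twistedComm_eq hU N, sA, ?_⟩
  · conv_lhs => rw [← hN]
    exact twistedComm_eq hU (Set.centralizer N)
  · rw [twistedComm_eq hU]
    intro b hb a ha
    have := congrArg star (hb _ (sA a ha))
    simpa [star_mul] using this.symm

lemma twist_gradA (hU : U * U = 1) {N : Set (H →L[ℂ] H)} (hg : ∀ T ∈ N, U * T * U ∈ N) :
    ∀ a ∈ twist U '' N, U * a * U ∈ twist U '' N := by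
  rintro _ ⟨T, hT, rfl⟩
  exact ⟨_, hg T hT, (twist_grad hU T).symm⟩

lemma twist_gradB (hU : U * U = 1) {N : Set (H →L[ℂ] H)} (hg : ∀ T ∈ N, U * T * U ∈ N) :
    ∀ b ∈ twistedComm U N, U * b * U ∈ twistedComm U N := by
  rw [twistedComm_eq hU]
  intro b hb a ha
  have h := hb _ (twist_gradA hU hg a ha)
  calc a * (U * b * U) = (U * U) * a * (U * b * U) := by rw [hU, one_mul]
    _ = U * ((U * a * U) * b) * U := by simp only [mul_assoc]
    _ = U * b * U * a * (U * U) := by rw [h]; simp only [mul_assoc]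
    _ = U * b * U * a := by rw [hU, mul_one]
end Twist

section Final
variable {H : ℕ → Type*} [∀ i, NormedAddCommGroup (H i)]
    [∀ i, InnerProductSpace ℂ (H i)] [∀ i, CompleteSpace (H i)]
    {HH : Type*} [NormedAddCommGroup HH] [InnerProductSpace ℂ HH] [CompleteSpace HH]
variable {ξ : ∀ i, H i} {tp : (n : ℕ) → ((i : Fin n) → H i.val) → HH}
variable {U : ∀ i, H i →L[ℂ] H i} {W : HH →L[ℂ] HH}
namespace IsITP
variable (K : IsITP ξ tp)

lemma W_sq (K : IsITP ξ tp) (hU : ∀ i, U i * U i = 1)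
    (hW : ∀ n x, W (tau tp n x) = tau tp n (fun i => U i (x i))) : W * W = 1 := by
  refine K.op_ext 0 fun m x _ => ?_
  change W (W _) = _
  rw [hW, hW]
  refine tau_congr m fun i _ => ?_
  exact DFunLike.congr_fun (hU i) (x i)

lemma W_star (K : IsITP ξ tp) (hUs : ∀ i, star (U i) = U i)
    (hW : ∀ n x, W (tau tp n x) = tau tp n (fun i => U i (x i))) : star W = W := by
  refine K.op_ext 0 fun m x _ => ?_
  refine K.vec_ext m fun m' y hm => ?_
  rw [← K.tau_raise hm, starOpR, hW, hW, K.tau_inner, K.tau_inner]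
  refine Finset.prod_congr rfl fun i _ => ?_
  rw [← starOpR, hUs]

lemma W_pi (K : IsITP ξ tp) (hU : ∀ i, U i * U i = 1)
    (hW : ∀ n x, W (tau tp n x) = tau tp n (fun i => U i (x i))) (i : ℕ) (a : H i →L[ℂ] H i) :
    W * K.pi i a = K.pi i (U i * a * U i) * W := by
  refine K.op_ext (i + 1) fun m x hm => ?_
  change W (K.pi i a _) = K.pi i _ (W _)
  rw [hW, K.pi_tau (by omega), K.pi_tau (by omega), hW]
  refine tau_congr m fun j _ => ?_
  by_cases h : j = i
  · subst h
    have : U j (U j (x j)) = x j := DFunLike.congr_fun (hU j) (x j)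
    simp [this]
  · rw [Function.update_of_ne h, Function.update_of_ne h]

lemma W_even (K : IsITP ξ tp) (hU : ∀ i, U i * U i = 1)
    (hW : ∀ n x, W (tau tp n x) = tau tp n (fun i => U i (x i))) {i : ℕ} {a : H i →L[ℂ] H i}
    (h : U i * a * U i = a) : Commute W (K.pi i a) := by
  have := K.W_pi hU hW i a
  rwa [h] at this

lemma W_odd (K : IsITP ξ tp) (hU : ∀ i, U i * U i = 1)
    (hW : ∀ n x, W (tau tp n x) = tau tp n (fun i => U i (x i))) {i : ℕ} {a : H i →L[ℂ] H i}
    (h : U i * a * U i = -a) : SComm (-1) W (K.pi i a) := by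
  have := K.W_pi hU hW i a
  unfold SComm
  rw [this, h, K.pi_neg]; simp

lemma W_pr (K : IsITP ξ tp) (hU : ∀ i, U i * U i = 1)
    (hW : ∀ n x, W (tau tp n x) = tau tp n (fun i => U i (x i))) (n : ℕ) :
    Commute W (K.pr U n) :=
  (K.pr_commute fun i _ => (K.W_even hU hW (by rw [hU, one_mul])).symm).symm

lemma pr_even (K : IsITP ξ tp) (hU : ∀ i, U i * U i = 1) (n : ℕ) {i : ℕ} {a : H i →L[ℂ] H i}
    (h : U i * a * U i = a) : Commute (K.pr U n) (K.pi i a) := by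
  refine K.pr_commute fun j _ => ?_
  by_cases hij : j = i
  · subst hij; exact scomm_one.1 (K.pi_scomm (conj_even (hU j) h))
  · exact K.pi_comm hij _ _

lemma pr_odd (K : IsITP ξ tp) (hU : ∀ i, U i * U i = 1) (n : ℕ) {i : ℕ} {a : H i →L[ℂ] H i}
    (h : U i * a * U i = -a) : SComm (if i < n then -1 else 1) (K.pr U n) (K.pi i a) := by
  have := K.pr_scomm (n := n) (T := U) (x := K.pi i a) (f := fun j => if j = i then 1 else 0)
    (fun j _ => by
      by_cases hij : j = i
      · subst hij; simpa using K.pi_scomm (conj_odd (hU j) h)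
      · simp only [hij, if_false, pow_zero]
        exact scomm_one.2 (K.pi_comm hij _ _))
  rw [Finset.sum_ite_eq'] at this
  by_cases hi : i < n
  · simpa [hi] using this
  · simpa [hi] using this

lemma pr_sq (K : IsITP ξ tp) (hU : ∀ i, U i * U i = 1) (n : ℕ) : K.pr U n * K.pr U n = 1 := by
  refine K.op_ext n fun m x hm => ?_
  change K.pr U n (K.pr U n _) = _
  rw [K.pr_tau _ _ _ hm, K.pr_tau _ _ _ hm]
  refine tau_congr m fun i _ => ?_
  have : U i (U i (x i)) = x i := DFunLike.congr_fun (hU i) (x i)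
  by_cases h : i < n <;> simp [h, this]

lemma twist_beta_even (K : IsITP ξ tp) (hU : ∀ i, U i * U i = 1)
    (hW : ∀ n x, W (tau tp n x) = tau tp n (fun i => U i (x i))) {i : ℕ} {T : H i →L[ℂ] H i}
    (h : U i * T * U i = T) : twist W (K.beta U false i T) = K.pi i (twist (U i) T) := by
  have h1 : K.beta U false i T = K.pi i T := by simp [beta]
  rw [h1, twist_even h, twist_even]
  rw [(K.W_even hU hW h).eq, mul_assoc, K.W_sq hU hW, mul_one]

lemma twist_beta_odd (K : IsITP ξ tp) (hU : ∀ i, U i * U i = 1)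
    (hW : ∀ n x, W (tau tp n x) = tau tp n (fun i => U i (x i))) {i : ℕ} {T : H i →L[ℂ] H i}
    (h : U i * T * U i = -T) : twist W (K.beta U true i T) =
      K.pi i (twist (U i) T) * (K.pr U (i + 1) * W) := by
  have h1 : K.beta U true i T = K.pr U i * K.pi i T := by simp [beta]
  have hw := K.W_odd hU hW h
  have hws : W * K.pi i T = - (K.pi i T * W) := by rw [hw, neg_one_smul]
  have hwp := K.W_pr hU hW i
  have hpt : Commute (K.pr U i) (K.pi i T) := by
    have := K.pr_odd hU i h
    rwa [if_neg (lt_irrefl i), scomm_one] at this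
  have hod : W * (K.pr U i * K.pi i T) = -(K.pr U i * K.pi i T * W) := by
    rw [← mul_assoc, hwp.eq, mul_assoc, hws, mul_neg, mul_assoc]
  rw [h1, twist_odd h, twist_odd, K.pi_smul, smul_mul_assoc]
  · congr 1
    have hUT : U i * T = -(T * U i) := by rw [conj_odd (hU i) h, neg_one_smul]
    have hpr : K.pr U (i + 1) = K.pr U i * K.pi i (U i) := rfl
    have hpp : K.pi i (U i) * K.pi i (U i) = 1 := by rw [← K.pi_mul, hU, K.pi_one]
    rw [hod, hUT, K.pi_neg, neg_mul, K.pi_mul, hpr, ← (K.pi_pr_comm (U := U) i i).eq, hpt.eq]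
    congr 1
    calc K.pi i T * K.pr U i * W = K.pi i T * (1 * (K.pr U i * W)) := by
          rw [one_mul, mul_assoc]
      _ = _ := by rw [← hpp]; simp only [mul_assoc]
  · rw [hod, neg_mul, mul_assoc, K.W_sq hU hW, mul_one]

lemma cross (K : IsITP ξ tp) {A B : ∀ i, Set (H i →L[ℂ] H i)} (hAB : ∀ i, VNPair (A i) (B i))
    (hU : ∀ i, U i * U i = 1)
    (hW : ∀ n x, W (tau tp n x) = tau tp n (fun i => U i (x i)))
    (s s' : Bool) {i j : ℕ} {T : H i →L[ℂ] H i} (hT : twist (U i) T ∈ A i)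
    (hs : U i * T * U i = cond s (-T) T) {b : H j →L[ℂ] H j} (hb : b ∈ B j)
    (hs' : U j * b * U j = cond s' (-b) b) :
    Commute (K.beta U s' j b) (twist W (K.beta U s i T)) := by
  have hsite : Commute (K.pi j b) (K.pi i (twist (U i) T)) := by
    by_cases h : j = i
    · subst h
      change _ * _ = _ * _
      rw [← K.pi_mul, ← K.pi_mul, (hAB j).comm hT hb]
    · exact K.pi_comm h _ _
  cases s with
  | false =>
    simp only [cond_false] at hs
    rw [K.twist_beta_even hU hW hs]
    have he : Commute (K.pr U j) (K.pi i (twist (U i) T)) := by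
      rw [twist_even hs]; exact K.pr_even hU j hs
    cases s' with
    | false => simpa [beta] using hsite
    | true => simpa [beta] using he.mul_left hsite
  | true =>
    simp only [cond_true] at hs
    rw [K.twist_beta_odd hU hW hs]
    have ho : U i * twist (U i) T * U i = - twist (U i) T := by
      rw [twist_grad (hU i), hs, twist_neg]
    cases s' with
    | false =>
      simp only [cond_false] at hs'
      have h1 : K.beta U false j b = K.pi j b := by simp [beta]
      rw [h1]
      exact hsite.mul_right ((K.pr_even hU _ hs').symm.mul_right (K.W_even hU hW hs').symm)
    | true =>
      simp only [cond_true] at hs'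
      have h1 : K.beta U true j b = K.pr U j * K.pi j b := by simp [beta]
      rw [h1]
      have hprpr : Commute (K.pr U j) (K.pr U (i + 1)) :=
        K.pr_commute fun k _ => K.pi_pr_comm (i + 1) k
      have s1 := (K.pr_odd hU j ho).mul_left (scomm_one.2 hsite)
      have s2 := (scomm_one.2 hprpr).mul_left ((K.pr_odd hU (i + 1) hs').symm (by
        by_cases h : j < i + 1 <;> simp [h]))
      have s3 := (scomm_one.2 (K.W_pr hU hW j).symm).mul_left ((K.W_odd hU hW hs').symm (by simp))
      have := s1.mul_right (s2.mul_right s3)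
      rw [← scomm_one]
      convert this using 1
      by_cases h : i < j
      · simp [h, not_lt.2 (show i + 1 ≤ j by omega)]
      · simp [h, show j < i + 1 by omega]

lemma final (K : IsITP ξ tp) (hUs : ∀ i, star (U i) = U i) (hU : ∀ i, U i * U i = 1)
    (hW : ∀ n x, W (tau tp n x) = tau tp n (fun i => U i (x i)))
    (N : ∀ i : ℕ, Set (H i →L[ℂ] H i))
    (hN : ∀ i, Set.centralizer (Set.centralizer (N i)) = N i)
    (hNstar : ∀ i, ∀ T ∈ N i, star T ∈ N i)
    (hNgrad : ∀ i, ∀ T ∈ N i, U i * T * U i ∈ N i) :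
    twistedComm W (Set.centralizer (Set.centralizer (infFermiGen U tp N))) =
      Set.centralizer (Set.centralizer
        (infFermiGen U tp (fun i => twistedComm (U i) (N i)))) := by
  have hWW := K.W_sq hU hW
  have hWs := K.W_star hUs hW
  have hAB : ∀ i, VNPair (twist (U i) '' N i) (twistedComm (U i) (N i)) := fun i =>
    twist_pair (hU i) (hUs i) (hN i) (hNstar i)
  have oneN : ∀ i, 1 ∈ N i := fun i => by rw [← hN i]; exact Set.one_mem_centralizer
  have oneB : ∀ i, 1 ∈ twistedComm (U i) (N i) := fun i => (hAB i).symm.one_mem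
  have e : twistedComm W (Set.centralizer (Set.centralizer (infFermiGen U tp N))) =
      twistedComm W (infFermiGen U tp N) := by
    unfold twistedComm
    rw [Set.centralizer_centralizer_centralizer]
  rw [e]
  ext X
  constructor
  · rintro ⟨x, hx, rfl⟩ y hy
    rw [K.mem_centralizer_iff hU oneN] at hx
    have hy' := (K.mem_centralizer_iff (N := fun i => twistedComm (U i) (N i)) hU oneB).1 hy
    refine (K.graded_infinite hAB hU (fun i => twist_gradA (hU i) (hNgrad i))
      (fun i => twist_gradB (hU i) (hNgrad i)) hW hWs ?_ ?_ ?_ ?_).symm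
    · rintro i _ ⟨T, hT, rfl⟩ hh
      rw [twist_grad (hU i)] at hh
      have hh := twist_inj (hU i) hh
      rw [← K.twist_beta_even hU hW hh]
      exact (twist_commute hWW).2 (hx false i T hT hh)
    · rintro i _ ⟨T, hT, rfl⟩ hh
      rw [twist_grad (hU i), ← twist_neg] at hh
      have hh := twist_inj (hU i) hh
      rw [← K.twist_beta_odd hU hW hh]
      exact (twist_commute hWW).2 (hx true i T hT hh)
    · intro i b hb hh
      simpa [beta] using hy' false i b hb hh
    · intro i b hb hh
      simpa [beta] using hy' true i b hb hh
  · intro hX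
    refine ⟨untwist W X, ?_, twist_untwist hWW X⟩
    rw [K.mem_centralizer_iff hU oneN]
    intro s i T hT hs
    refine (twist_commute hWW).1 ?_
    rw [twist_untwist hWW]
    refine hX _ ?_
    rw [K.mem_centralizer_iff hU oneB]
    intro s' j b hb hs'
    exact K.cross hAB hU hW s s' ⟨T, hT, rfl⟩ hs hb hs'

end IsITP
end Final

/-- Theorem 4.6, twisted commutation theorem for infinitely many factors.
Let `(H i, U i)` be `ℤ₂`-graded Hilbert spaces, `N i` von Neumann algebras on `H i` with
`Uᵢ Nᵢ Uᵢ = Nᵢ`, and `ξ = (ξᵢ)` a sequence of unit vectors with `Uᵢ ξᵢ = ξᵢ`.  Then on the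
infinite tensor product Hilbert space `⊗_ξ H i` (realized by `HH` with simple tensor maps
`tp`), graded by `W = ⊗ U i`, the twisted commutant of the infinite Fermi tensor product
satisfies `(⊗̂_ξ N i)^≀ = ⊗̂_ξ (N i)^≀`. -/
theorem statement18 (H : ℕ → Type*) [∀ i, NormedAddCommGroup (H i)]
    [∀ i, InnerProductSpace ℂ (H i)] [∀ i, CompleteSpace (H i)]
    (U : ∀ i : ℕ, H i →L[ℂ] H i)
    (hUsa : ∀ i, star (U i) = U i) (hUunit : ∀ i, U i * U i = 1)
    (ξv : ∀ i : ℕ, H i) (hξnorm : ∀ i, ‖ξv i‖ = 1) (hξU : ∀ i, U i (ξv i) = ξv i)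
    {HH : Type*} [NormedAddCommGroup HH] [InnerProductSpace ℂ HH] [CompleteSpace HH]
    -- a realization of the infinite tensor product Hilbert space `⊗_ξ H i`
    (tp : (n : ℕ) → ((i : Fin n) → H i.val) → HH)
    (htp_ml : ∀ (n : ℕ) (x : (i : Fin n) → H i.val) (i : Fin n) (u v : H i.val) (c : ℂ),
      tp n (Function.update x i (c • u + v)) =
        c • tp n (Function.update x i u) + tp n (Function.update x i v))
    (htp_inner : ∀ (n : ℕ) (x y : (i : Fin n) → H i.val),
      ⟪tp n x, tp n y⟫_ℂ = ∏ i : Fin n, ⟪x i, y i⟫_ℂ)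
    (htp_compat : ∀ (n : ℕ) (x : (i : Fin n) → H i.val),
      tp (n + 1) (Fin.snoc x (ξv n)) = tp n x)
    (htp_dense : Dense (Submodule.span ℂ (⋃ n : ℕ, Set.range (tp n)) : Set HH))
    -- the grading `W = ⊗ U i`
    (W : HH →L[ℂ] HH)
    (hW : ∀ (n : ℕ) (x : (i : Fin n) → H i.val), W (tp n x) = tp n (fun i => U i.val (x i)))
    -- the von Neumann algebras
    (N : ∀ i : ℕ, Set (H i →L[ℂ] H i))
    (hN : ∀ i, Set.centralizer (Set.centralizer (N i)) = N i)
    (hNstar : ∀ i, ∀ T ∈ N i, star T ∈ N i)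
    (hNgrad : ∀ i, (fun T : H i →L[ℂ] H i => U i * T * U i) '' N i = N i) :
    twistedComm W (Set.centralizer (Set.centralizer (infFermiGen U tp N))) =
      Set.centralizer (Set.centralizer
        (infFermiGen U tp (fun i => twistedComm (U i) (N i)))) := by
  have K : IsITP ξv tp := ⟨hξnorm, htp_ml, htp_inner, htp_compat, htp_dense⟩
  refine K.final hUsa hUunit (fun n x => hW n (fun i => x i.val)) N hN hNstar ?_
  intro i T hT
  rw [← hNgrad i]
  exact ⟨T, hT, rfl⟩

end
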